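/- arXiv:1910.03303 — 4 statements merged into one kernel-verified Lean document; each statement's English description precedes it below -/
import Mathlib

section
/- Assume the reverse Loewner flow setup with 0 < σ < 4. Let p ∈ (σ/(4−σ), ∞) be such that 16p² − σ²(p+1)² > 0 and e^p = √(16−σ²)/√(16p² − σ²(p+1)²), and set L = σ·(1+p)·e^p/√(16−σ²). Then |X(s)| ≤ L·Y(s) for all s ∈ [0,t]. -/
open Set MeasureTheory intervalIntegral Real

lemma key_alg (σ ℓ K v D X Y : ℝ) (hσ : 0 < σ) (hℓ : 0 < ℓ) (hK : 0 ≤ K) (hv : 0 < v)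
    (hD : 0 < D) (hDv : D ≤ σ * v) (hX : 0 ≤ X) (hXD : X ≤ D) (hY : 0 < Y) (hYD : ℓ * Y ≤ D)
    (hA : ∀ δ ∈ Icc (0:ℝ) 1, σ ^ 2 * δ / 4 * (1 + K * δ * (1 - δ)) ≤ ℓ ^ 2)
    (hB : ∀ δ ∈ Icc (0:ℝ) 1,
      σ ^ 2 * δ / 4 * (1 + K * δ * (1 - δ)) * (1 + 1 / ℓ ^ 2) ≤ 2 + K * δ) :
    (σ * (1 / (2 * v)) - 2 * X / (X ^ 2 + Y ^ 2)) / D - (2 * Y / (X ^ 2 + Y ^ 2)) / Y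
      + K * (((σ * (1 / (2 * v)) - 2 * X / (X ^ 2 + Y ^ 2)) * (σ * v) - D * (σ * (1 / (2 * v))))
        / (σ * v) ^ 2) ≤ 0 := by
  obtain ⟨δ, hδ⟩ : ∃ δ, δ = D / (σ * v) := ⟨_, rfl⟩
  have hσv : 0 < σ * v := by positivity
  have hDe : D = δ * (σ * v) := by rw [hδ]; field_simp
  have hδ0 : 0 < δ := by rw [hδ]; positivity
  have hδ1 : δ ≤ 1 := by rw [hδ, div_le_one hσv]; exact hDv
  have hA1 := hA δ ⟨hδ0.le, hδ1⟩
  have hB1 := hB δ ⟨hδ0.le, hδ1⟩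
  obtain ⟨ξ, hξ⟩ : ∃ ξ, ξ = X / D := ⟨_, rfl⟩
  have hXe : X = ξ * D := by rw [hξ]; field_simp
  have hξ0 : 0 ≤ ξ := by rw [hξ]; positivity
  have hξ1 : ξ ≤ 1 := by rw [hξ, div_le_one hD]; exact hXD
  obtain ⟨T, hT⟩ : ∃ T, T = σ ^ 2 * δ / 4 * (1 + K * δ * (1 - δ)) := ⟨_, rfl⟩
  rw [← hT] at hA1 hB1
  obtain ⟨N, hN⟩ : ∃ N, N = X ^ 2 + Y ^ 2 := ⟨_, rfl⟩
  have hNpos : 0 < N := by rw [hN]; positivity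
  have hNle : N ≤ D ^ 2 * (ξ + 1 / ℓ ^ 2) := by
    have h1 : X ^ 2 ≤ D ^ 2 * ξ := by
      rw [hXe, mul_pow]
      nlinarith [mul_nonneg (mul_nonneg hξ0 (sub_nonneg.2 hξ1)) (sq_nonneg D)]
    have h2 : Y ^ 2 ≤ D ^ 2 * (1 / ℓ ^ 2) := by
      rw [mul_one_div, le_div_iff₀ (by positivity)]
      nlinarith [mul_self_le_mul_self (by positivity) hYD]
    rw [hN]; linarith
  have hT0 : 0 ≤ T := by
    rw [hT]
    have : 0 ≤ 1 - δ := by linarith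
    positivity
  have hPN : T / D ^ 2 * N ≤ T * (ξ + 1 / ℓ ^ 2) := by
    calc T / D ^ 2 * N ≤ T / D ^ 2 * (D ^ 2 * (ξ + 1 / ℓ ^ 2)) := by gcongr
      _ = _ := by field_simp
  have hA2 : T * (1 / ℓ ^ 2) ≤ 1 := by
    rw [mul_one_div, div_le_one (by positivity)]; exact hA1
  have hE : T / D ^ 2 * N - ξ - 1 - K * δ * ξ ≤ 0 := by
    nlinarith [mul_nonneg (sub_nonneg.2 hξ1) (sub_nonneg.2 hA2), mul_nonneg hξ0 (sub_nonneg.2 hB1)]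
  rw [← hN]
  have hid : (σ * (1 / (2 * v)) - 2 * X / N) / D - (2 * Y / N) / Y
      + K * (((σ * (1 / (2 * v)) - 2 * X / N) * (σ * v) - D * (σ * (1 / (2 * v))))
        / (σ * v) ^ 2) = 2 / N * (T / D ^ 2 * N - ξ - 1 - K * δ * ξ) := by
    rw [hT, hXe, hDe]
    field_simp
    ring
  rw [hid]
  exact mul_nonpos_of_nonneg_of_nonpos (by positivity) hE

lemma core_bound (σ ℓ K a b : ℝ) (hσ : 0 < σ) (hℓ : 0 < ℓ) (hK : 0 ≤ K) (hab : a ≤ b)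
    (hA : ∀ δ ∈ Icc (0:ℝ) 1, σ ^ 2 * δ / 4 * (1 + K * δ * (1 - δ)) ≤ ℓ ^ 2)
    (hB : ∀ δ ∈ Icc (0:ℝ) 1,
      σ ^ 2 * δ / 4 * (1 + K * δ * (1 - δ)) * (1 + 1 / ℓ ^ 2) ≤ 2 + K * δ)
    (X Y J : ℝ → ℝ) (hJc : ContinuousOn J (Icc a b)) (hYc : ContinuousOn Y (Icc a b))
    (hJa : J a = 0)
    (hJd : ∀ s ∈ Ioo a b, HasDerivAt J (2 * X s / (X s ^ 2 + Y s ^ 2)) s)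
    (hYd : ∀ s ∈ Ioo a b, HasDerivAt Y (2 * Y s / (X s ^ 2 + Y s ^ 2)) s)
    (hY : ∀ s ∈ Icc a b, 0 < Y s) (hX : ∀ s ∈ Icc a b, 0 ≤ X s)
    (hXle : ∀ s ∈ Icc a b, X s ≤ σ * √(s - a) - J s) :
    X b ≤ ℓ * exp K * Y b := by
  have haI : a ∈ Icc a b := ⟨le_rfl, hab⟩
  have hbI : b ∈ Icc a b := ⟨hab, le_rfl⟩
  have hJ0 : ∀ s ∈ Icc a b, 0 ≤ J s := by
    have hm : MonotoneOn J (Icc a b) := by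
      apply monotoneOn_of_deriv_nonneg (convex_Icc a b) hJc
      · rw [interior_Icc]
        exact fun s hs => (hJd s hs).differentiableAt.differentiableWithinAt
      · rw [interior_Icc]
        intro s hs
        rw [(hJd s hs).deriv]
        have := hX s (Ioo_subset_Icc_self hs)
        positivity
    intro s hs
    rw [← hJa]; exact hm haI hs hs.1
  obtain ⟨ε, hε⟩ : ∃ ε, ε = (ℓ * Y a / σ) ^ 2 := ⟨_, rfl⟩
  have hYa := hY a haI
  have hε0 : 0 < ε := by rw [hε]; positivity
  let v : ℝ → ℝ := fun s => √(s - a + ε)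
  let D : ℝ → ℝ := fun s => σ * v s - J s
  have hv0 : ∀ s ∈ Icc a b, 0 < v s := fun s hs => Real.sqrt_pos.2 (by linarith [hs.1])
  have hvc : Continuous v := by fun_prop
  have hDc : ContinuousOn D (Icc a b) := (hvc.continuousOn.const_mul σ |>.sub hJc)
  have hvd : ∀ s ∈ Ioo a b, HasDerivAt v (1 / (2 * v s)) s := by
    intro s hs
    have h1 : HasDerivAt (fun s => s - a + ε) 1 s := ((hasDerivAt_id s).sub_const a).add_const ε
    exact h1.sqrt (by linarith [hs.1])
  have hDd : ∀ s ∈ Ioo a b, HasDerivAt D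
      (σ * (1 / (2 * v s)) - 2 * X s / (X s ^ 2 + Y s ^ 2)) s := fun s hs =>
    ((hvd s hs).const_mul σ).sub (hJd s hs)
  have hDX : ∀ s ∈ Icc a b, X s ≤ D s := by
    intro s hs
    have h1 : √(s - a) ≤ v s := Real.sqrt_le_sqrt (by linarith)
    have := hXle s hs
    have := mul_le_mul_of_nonneg_left h1 hσ.le
    change X s ≤ σ * v s - J s
    linarith
  have hDv : ∀ s ∈ Icc a b, D s ≤ σ * v s := by
    intro s hs
    have := hJ0 s hs
    change σ * v s - J s ≤ _
    linarith
  have hDa : D a = ℓ * Y a := by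
    change σ * √(a - a + ε) - J a = _
    rw [hJa, sub_self, zero_add, hε, Real.sqrt_sq (by positivity)]
    field_simp
    ring
  by_contra hcon
  push Not at hcon
  have hDb : ℓ * exp K * Y b < D b := lt_of_lt_of_le hcon (hDX b hbI)
  have hDb' : ℓ * Y b < D b := by
    have h1 : 1 ≤ exp K := Real.one_le_exp hK
    have h2 : 0 < ℓ * Y b := mul_pos hℓ (hY b hbI)
    nlinarith
  -- last time
  let G : ℝ → ℝ := fun s => D s - ℓ * Y s
  have hGc : ContinuousOn G (Icc a b) := hDc.sub (hYc.const_smul ℓ)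
  let Z : Set ℝ := Icc a b ∩ G ⁻¹' {0}
  have hZcl : IsClosed Z := hGc.preimage_isClosed_of_isClosed isClosed_Icc isClosed_singleton
  have hZc : IsCompact Z := isCompact_Icc.of_isClosed_subset hZcl inter_subset_left
  have hZne : Z.Nonempty := ⟨a, haI, by change D a - ℓ * Y a = 0; rw [hDa]; ring⟩
  obtain ⟨c, ⟨hcI, hc0⟩, hcmax⟩ := hZc.exists_isGreatest hZne
  have hc0' : D c - ℓ * Y c = 0 := hc0
  have hsub : Icc c b ⊆ Icc a b := Icc_subset_Icc_left hcI.1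
  have hG0 : ∀ s ∈ Icc c b, ℓ * Y s ≤ D s := by
    intro s hs
    by_contra hlt
    push Not at hlt
    have : (0:ℝ) ∈ Icc (G s) (G b) := ⟨by change D s - ℓ * Y s ≤ 0; linarith,
      by change 0 ≤ D b - ℓ * Y b; linarith⟩
    obtain ⟨u, hu, hu0⟩ := intermediate_value_Icc hs.2
      (hGc.mono (Icc_subset_Icc_left (hcI.1.trans hs.1))) this
    have huc : u ≤ c := hcmax ⟨⟨hcI.1.trans (hs.1.trans hu.1), hu.2⟩, hu0⟩
    have : s = c := le_antisymm (hu.1.trans huc) hs.1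
    subst this
    linarith
  have hDpos : ∀ s ∈ Icc c b, 0 < D s := fun s hs =>
    lt_of_lt_of_le (mul_pos hℓ (hY s (hsub hs))) (hG0 s hs)
  let F : ℝ → ℝ := fun s => Real.log (D s) - Real.log (Y s) + K * (D s / (σ * v s))
  have hFc : ContinuousOn F (Icc c b) := by
    refine ContinuousOn.add (ContinuousOn.sub ?_ ?_) (ContinuousOn.mul continuousOn_const ?_)
    · exact (hDc.mono hsub).log fun s hs => (hDpos s hs).ne'
    · exact (hYc.mono hsub).log fun s hs => (hY s (hsub hs)).ne'
    · exact (hDc.mono hsub).div (hvc.continuousOn.const_mul σ)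
        fun s hs => (mul_pos hσ (hv0 s (hsub hs))).ne'
  have hFd : ∀ s ∈ Ioo c b, HasDerivAt F
      ((σ * (1 / (2 * v s)) - 2 * X s / (X s ^ 2 + Y s ^ 2)) / D s
        - (2 * Y s / (X s ^ 2 + Y s ^ 2)) / Y s
      + K * (((σ * (1 / (2 * v s)) - 2 * X s / (X s ^ 2 + Y s ^ 2)) * (σ * v s)
        - D s * (σ * (1 / (2 * v s)))) / (σ * v s) ^ 2)) s := by
    intro s hs
    have hs1 : s ∈ Icc c b := Ioo_subset_Icc_self hs
    have hs2 : s ∈ Ioo a b := ⟨lt_of_le_of_lt hcI.1 hs.1, hs.2⟩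
    exact (((hDd s hs2).log (hDpos s hs1).ne').sub ((hYd s hs2).log (hY s (hsub hs1)).ne')).add
      (((hDd s hs2).div ((hvd s hs2).const_mul σ)
        (mul_pos hσ (hv0 s (hsub hs1))).ne').const_mul K)
  have hanti : AntitoneOn F (Icc c b) := by
    apply antitoneOn_of_deriv_nonpos (convex_Icc c b) hFc
    · rw [interior_Icc]
      exact fun s hs => (hFd s hs).differentiableAt.differentiableWithinAt
    · rw [interior_Icc]
      intro s hs
      rw [(hFd s hs).deriv]
      have hs1 : s ∈ Icc c b := Ioo_subset_Icc_self hs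
      have hs2 := hsub hs1
      exact key_alg σ ℓ K (v s) (D s) (X s) (Y s) hσ hℓ hK (hv0 s hs2) (hDpos s hs1)
        (hDv s hs2) (hX s hs2) (hDX s hs2) (hY s hs2) (hG0 s hs1) hA hB
  have hcc : c ∈ Icc c b := ⟨le_rfl, hcI.2⟩
  have hbc : b ∈ Icc c b := ⟨hcI.2, le_rfl⟩
  have hfin : F b ≤ F c := hanti hcc hbc hcI.2
  have h1 : D b / (σ * v b) ≥ 0 := div_nonneg (hDpos b hbc).le (mul_pos hσ (hv0 b hbI)).le
  have h2 : D c / (σ * v c) ≤ 1 := by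
    rw [div_le_one (mul_pos hσ (hv0 c hcI))]; exact hDv c hcI
  have h3 : Real.log (D c) = Real.log ℓ + Real.log (Y c) := by
    rw [← Real.log_mul hℓ.ne' (hY c hcI).ne']; congr 1; linarith
  have h4 : Real.log ℓ + K + Real.log (Y b) < Real.log (D b) := by
    have := Real.log_lt_log (by have := hY b hbI; positivity) hDb
    rwa [Real.log_mul (by positivity) (hY b hbI).ne', Real.log_mul hℓ.ne' (by positivity),
      Real.log_exp] at this
  change Real.log (D b) - Real.log (Y b) + K * (D b / (σ * v b)) ≤
    Real.log (D c) - Real.log (Y c) + K * (D c / (σ * v c)) at hfin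
  have h5 := mul_nonneg hK h1
  have h6 := mul_le_mul_of_nonneg_left h2 hK
  linarith

lemma one_side (σ ℓ K t : ℝ) (hσ0 : 0 < σ) (hℓ : 0 < ℓ) (hK : 0 ≤ K)
    (hA : ∀ δ ∈ Icc (0:ℝ) 1, σ ^ 2 * δ / 4 * (1 + K * δ * (1 - δ)) ≤ ℓ ^ 2)
    (hB : ∀ δ ∈ Icc (0:ℝ) 1,
      σ ^ 2 * δ / 4 * (1 + K * δ * (1 - δ)) * (1 + 1 / ℓ ^ 2) ≤ 2 + K * δ)
    (β : ℝ → ℝ) (hβ0 : β 0 = 0)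
    (hβlip : ∀ r ∈ Icc (0 : ℝ) t, ∀ s ∈ Icc (0 : ℝ) t, |β s - β r| ≤ σ * Real.sqrt |s - r|)
    (y : ℝ) (X Y : ℝ → ℝ)
    (hXcont : ContinuousOn X (Icc 0 t)) (hYcont : ContinuousOn Y (Icc 0 t))
    (hYpos : ∀ s ∈ Icc (0 : ℝ) t, 0 < Y s)
    (hX : ∀ s ∈ Icc (0 : ℝ) t,
      X s = β s - ∫ r in (0 : ℝ)..s, 2 * X r / (X r ^ 2 + Y r ^ 2))
    (hY : ∀ s ∈ Icc (0 : ℝ) t,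
      Y s = y + ∫ r in (0 : ℝ)..s, 2 * Y r / (X r ^ 2 + Y r ^ 2)) :
    ∀ s ∈ Icc (0 : ℝ) t, X s ≤ ℓ * exp K * Y s := by
  intro b hb
  have h0I : (0:ℝ) ∈ Icc 0 t := ⟨le_rfl, hb.1.trans hb.2⟩
  rcases le_or_gt (X b) 0 with hneg | hpos
  · exact hneg.trans (by have := hYpos b hb; positivity)
  have hX0 : X 0 = 0 := by rw [hX 0 h0I, hβ0]; simp
  have hNne : ∀ s ∈ Icc (0:ℝ) t, X s ^ 2 + Y s ^ 2 ≠ 0 := fun s hs => by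
    have := hYpos s hs; positivity
  have hfc : ContinuousOn (fun r => 2 * X r / (X r ^ 2 + Y r ^ 2)) (Icc 0 t) :=
    (hXcont.const_smul (2:ℝ)).div ((hXcont.pow 2).add (hYcont.pow 2)) hNne
  have hgc : ContinuousOn (fun r => 2 * Y r / (X r ^ 2 + Y r ^ 2)) (Icc 0 t) :=
    (hYcont.const_smul (2:ℝ)).div ((hXcont.pow 2).add (hYcont.pow 2)) hNne
  have hder : ∀ f : ℝ → ℝ, ContinuousOn f (Icc 0 t) → ∀ s ∈ Ioo 0 t,
      HasDerivAt (fun s => ∫ r in (0:ℝ)..s, f r) (f s) s := by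
    intro f hf s hs
    have hnh : Icc 0 t ∈ nhds s := Icc_mem_nhds hs.1 hs.2
    refine intervalIntegral.integral_hasDerivAt_right ?_ ?_ (hf.continuousAt hnh)
    · apply ContinuousOn.intervalIntegrable
      rw [uIcc_of_le hs.1.le]
      exact hf.mono (Icc_subset_Icc_right hs.2.le)
    · exact ⟨Icc 0 t, hnh, hf.aestronglyMeasurable measurableSet_Icc⟩
  -- last zero
  have hXb : ContinuousOn X (Icc 0 b) := hXcont.mono (Icc_subset_Icc_right hb.2)
  let Z : Set ℝ := Icc 0 b ∩ X ⁻¹' {0}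
  have hZcl : IsClosed Z := hXb.preimage_isClosed_of_isClosed isClosed_Icc isClosed_singleton
  have hZc : IsCompact Z := isCompact_Icc.of_isClosed_subset hZcl inter_subset_left
  obtain ⟨a, ⟨haI, ha0⟩, hamax⟩ := hZc.exists_isGreatest ⟨0, ⟨le_rfl, hb.1⟩, hX0⟩
  have ha0' : X a = 0 := ha0
  have hsub : Icc a b ⊆ Icc 0 t := Icc_subset_Icc haI.1 hb.2
  have hsubo : Ioo a b ⊆ Ioo 0 t := Ioo_subset_Ioo haI.1 hb.2
  have haT : a ∈ Icc 0 t := hsub ⟨le_rfl, haI.2⟩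
  have hXnn : ∀ s ∈ Icc a b, 0 ≤ X s := by
    intro s hs
    by_contra hlt
    push Not at hlt
    obtain ⟨u, hu, hu0⟩ := intermediate_value_Icc hs.2
      (hXb.mono (Icc_subset_Icc_left (haI.1.trans hs.1))) (show (0:ℝ) ∈ Icc (X s) (X b) from ⟨hlt.le, hpos.le⟩)
    have huc : u ≤ a := hamax ⟨⟨haI.1.trans (hs.1.trans hu.1), hu.2⟩, hu0⟩
    have : s = a := le_antisymm (hu.1.trans huc) hs.1
    subst this
    linarith
  let J : ℝ → ℝ := fun s => (β s - X s) - (β a - X a)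
  have hJe : ∀ s ∈ Icc 0 t, J s = (∫ r in (0 : ℝ)..s, 2 * X r / (X r ^ 2 + Y r ^ 2))
      - (β a - X a) := by
    intro s hs
    change (β s - X s) - (β a - X a) = _
    have := hX s hs
    linarith
  have hJd : ∀ s ∈ Ioo a b, HasDerivAt J (2 * X s / (X s ^ 2 + Y s ^ 2)) s := by
    intro s hs
    refine ((hder _ hfc s (hsubo hs)).sub_const (β a - X a)).congr_of_eventuallyEq ?_
    filter_upwards [Icc_mem_nhds (hsubo hs).1 (hsubo hs).2] with u hu using hJe u hu
  have hYd : ∀ s ∈ Ioo a b, HasDerivAt Y (2 * Y s / (X s ^ 2 + Y s ^ 2)) s := by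
    intro s hs
    refine ((hder _ hgc s (hsubo hs)).const_add y).congr_of_eventuallyEq ?_
    filter_upwards [Icc_mem_nhds (hsubo hs).1 (hsubo hs).2] with u hu using hY u hu
  have hJc : ContinuousOn J (Icc a b) := by
    have h1 : ContinuousOn (fun s => ∫ r in (0 : ℝ)..s, 2 * X r / (X r ^ 2 + Y r ^ 2))
        (Icc 0 t) := by
      have h2 := intervalIntegral.continuousOn_primitive_interval (a := 0) (b := t) (μ := volume)
        (f := fun r => 2 * X r / (X r ^ 2 + Y r ^ 2))
        (by rw [uIcc_of_le h0I.2]; exact hfc.integrableOn_Icc)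
      rwa [uIcc_of_le h0I.2] at h2
    exact ((h1.mono hsub).sub continuousOn_const).congr fun s hs => hJe s (hsub hs)
  refine core_bound σ ℓ K a b hσ0 hℓ hK haI.2 hA hB X Y J hJc (hYcont.mono hsub) (by simp [J])
    hJd hYd (fun s hs => hYpos s (hsub hs)) hXnn ?_
  intro s hs
  have h1 := (le_abs_self _).trans (hβlip a haT s (hsub hs))
  rw [abs_of_nonneg (sub_nonneg.2 hs.1)] at h1
  change X s ≤ σ * √(s - a) - ((β s - X s) - (β a - X a))
  linarith

lemma params (σ p L : ℝ) (hσ0 : 0 < σ) (hσ : σ < 4) (hp0 : 0 < p)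
    (hp_pos : 0 < 16 * p ^ 2 - σ ^ 2 * (p + 1) ^ 2)
    (hp_eq : Real.exp p =
      Real.sqrt (16 - σ ^ 2) / Real.sqrt (16 * p ^ 2 - σ ^ 2 * (p + 1) ^ 2))
    (hL : L = σ * (1 + p) * Real.exp p / Real.sqrt (16 - σ ^ 2)) :
    ∃ ℓ K : ℝ, 0 < ℓ ∧ 0 ≤ K ∧ ℓ * exp K = L ∧
    (∀ δ ∈ Icc (0:ℝ) 1, σ ^ 2 * δ / 4 * (1 + K * δ * (1 - δ)) ≤ ℓ ^ 2) ∧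
    (∀ δ ∈ Icc (0:ℝ) 1,
      σ ^ 2 * δ / 4 * (1 + K * δ * (1 - δ)) * (1 + 1 / ℓ ^ 2) ≤ 2 + K * δ) := by
  have h16 : 0 < 16 - σ ^ 2 := by nlinarith
  have hs := Real.sqrt_pos.2 h16
  rcases le_or_gt p 1 with hp1 | hp1
  · have hQ := Real.sqrt_pos.2 hp_pos
    have hL2 : L ^ 2 = σ ^ 2 * (1 + p) ^ 2 / (16 * p ^ 2 - σ ^ 2 * (p + 1) ^ 2) := by
      rw [hL, hp_eq, div_pow, mul_pow, div_pow, Real.sq_sqrt h16.le, Real.sq_sqrt hp_pos.le]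
      field_simp
    have hLpos : 0 < L := by rw [hL]; positivity
    refine ⟨L, 0, hLpos, le_rfl, by simp, ?_, ?_⟩
    · rintro δ ⟨h0, h1⟩
      rw [hL2, le_div_iff₀ hp_pos]
      have e1 : 16 * p ^ 2 - σ ^ 2 * (p + 1) ^ 2 ≤ 4 * (1 + p) ^ 2 := by
        nlinarith [sq_nonneg (σ * (p + 1))]
      have e2 : σ ^ 2 * δ / 4 * (1 + 0 * δ * (1 - δ)) ≤ σ ^ 2 / 4 := by nlinarith [sq_nonneg σ]
      calc _ ≤ σ ^ 2 / 4 * (4 * (1 + p) ^ 2) := by gcongr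
        _ = _ := by ring
    · rintro δ ⟨h0, h1⟩
      have e : σ ^ 2 * (1 + 1 / L ^ 2) = 16 * p ^ 2 / (1 + p) ^ 2 := by
        rw [hL2]; field_simp; ring
      have e2 : 16 * p ^ 2 / (1 + p) ^ 2 ≤ 8 := by
        rw [div_le_iff₀ (by positivity)]; nlinarith
      have e3 : σ ^ 2 * δ / 4 * (1 + 0 * δ * (1 - δ)) * (1 + 1 / L ^ 2)
        = δ / 4 * (16 * p ^ 2 / (1 + p) ^ 2) := by rw [← e]; ring
      rw [e3]
      nlinarith
  · obtain ⟨ℓ, hℓ⟩ : ∃ ℓ, ℓ = σ * (1 + p) / √(16 - σ ^ 2) := ⟨_, rfl⟩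
    have hl2 : ℓ ^ 2 = σ ^ 2 * (1 + p) ^ 2 / (16 - σ ^ 2) := by
      rw [hℓ, div_pow, mul_pow, Real.sq_sqrt h16.le]
    refine ⟨ℓ, p, by rw [hℓ]; positivity, hp0.le, by rw [hL, hℓ]; ring, ?_, ?_⟩
    · rintro δ ⟨h0, h1⟩
      have hd : 0 ≤ 1 - δ := by linarith
      have hm : 4 * (δ * (1 + p * δ * (1 - δ))) ≤ (1 + p) ^ 2 := by
        have hh : 0 < p - 1 := by linarith
        have a1 : 0 ≤ (1 - δ) * (1 - δ ^ 2) := mul_nonneg hd (by nlinarith)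
        have a2 : 0 ≤ (p - 1) * (1 - δ ^ 2 * (1 - δ)) := by
          apply mul_nonneg hh.le
          nlinarith [mul_nonneg h0 hd, mul_nonneg (mul_nonneg h0 h0) h0]
        nlinarith [sq_nonneg (p - 1)]
      rw [hl2, le_div_iff₀ h16]
      have hq : 0 ≤ δ * (1 + p * δ * (1 - δ)) := by positivity
      calc _ = σ ^ 2 / 4 * (δ * (1 + p * δ * (1 - δ))) * (16 - σ ^ 2) := by ring
        _ ≤ σ ^ 2 / 4 * (δ * (1 + p * δ * (1 - δ))) * 16 := by gcongr; nlinarith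
        _ = σ ^ 2 * (4 * (δ * (1 + p * δ * (1 - δ)))) := by ring
        _ ≤ _ := by gcongr
    · rintro δ ⟨h0, h1⟩
      have hd : 0 ≤ 1 - δ := by linarith
      obtain ⟨A, hA⟩ : ∃ A, A = (σ ^ 2 * ((1 + p) ^ 2 - 1) + 16) / (16 * (1 + p) ^ 2) := ⟨_, rfl⟩
      have e : σ ^ 2 * (1 + 1 / ℓ ^ 2) = 16 * A := by
        rw [hl2, hA]; field_simp; ring
      have hA0 : 0 ≤ A := by
        have : 0 < σ ^ 2 * (1 + 1 / ℓ ^ 2) := by positivity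
        linarith
      have hA1 : A * (p + 4) ≤ p + 2 := by
        have hS : σ ^ 2 ≤ 16 * p ^ 2 / (1 + p) ^ 2 := by
          rw [le_div_iff₀ (by positivity)]; nlinarith
        have : A ≤ (16 * p ^ 2 / (1 + p) ^ 2 * ((1 + p) ^ 2 - 1) + 16) / (16 * (1 + p) ^ 2) := by
          rw [hA]
          have : 0 ≤ (1 + p) ^ 2 - 1 := by nlinarith
          gcongr
        have h2 : (16 * p ^ 2 / (1 + p) ^ 2 * ((1 + p) ^ 2 - 1) + 16) / (16 * (1 + p) ^ 2)
          ≤ (p + 2) / (p + 4) := by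
          rw [div_le_div_iff₀ (by positivity) (by positivity), ← sub_nonneg]
          have : (p + 2) * (16 * (1 + p) ^ 2) -
              (16 * p ^ 2 / (1 + p) ^ 2 * ((1 + p) ^ 2 - 1) + 16) * (p + 4)
              = 16 * (5 * p ^ 3 + 10 * p ^ 2 - 2) / (1 + p) ^ 2 := by
            field_simp; ring
          rw [this]
          apply div_nonneg _ (by positivity)
          nlinarith [pow_pos hp0 3]
        rw [← le_div_iff₀ (by positivity)]
        exact this.trans h2
      have e3 : σ ^ 2 * δ / 4 * (1 + p * δ * (1 - δ)) * (1 + 1 / ℓ ^ 2)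
        = 4 * A * δ * (1 + p * δ * (1 - δ)) := by
        calc _ = (σ ^ 2 * (1 + 1 / ℓ ^ 2)) * (δ / 4 * (1 + p * δ * (1 - δ))) := by ring
          _ = _ := by rw [e]; ring
      rw [e3]
      have b1 : 0 ≤ A * δ * p * (1 - 2 * δ) ^ 2 := by positivity
      have b2 := mul_nonneg h0 (sub_nonneg.2 hA1)
      nlinarith

/-- Cone bound for the reverse Loewner flow in the full range `0 < σ < 4`:
`|X(s)| ≤ L_σ·Y(s)` with `L_σ = σ(1+p)e^p/√(16−σ²)` where `p` solves
`e^p = √(16−σ²)/√(16p² − σ²(p+1)²)`. -/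
theorem reverse_flow_cone_bound
    (σ t : ℝ) (hσ0 : 0 < σ) (ht : 0 < t)
    (β : ℝ → ℝ) (hβcont : ContinuousOn β (Icc 0 t)) (hβ0 : β 0 = 0)
    (hβlip : ∀ r ∈ Icc (0 : ℝ) t, ∀ s ∈ Icc (0 : ℝ) t, |β s - β r| ≤ σ * Real.sqrt |s - r|)
    (y : ℝ) (hy : 0 < y)
    (X Y : ℝ → ℝ)
    (hXcont : ContinuousOn X (Icc 0 t)) (hYcont : ContinuousOn Y (Icc 0 t))
    (hYpos : ∀ s ∈ Icc (0 : ℝ) t, 0 < Y s)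
    (hX : ∀ s ∈ Icc (0 : ℝ) t,
      X s = β s - ∫ r in (0 : ℝ)..s, 2 * X r / (X r ^ 2 + Y r ^ 2))
    (hY : ∀ s ∈ Icc (0 : ℝ) t,
      Y s = y + ∫ r in (0 : ℝ)..s, 2 * Y r / (X r ^ 2 + Y r ^ 2))
    (hσ : σ < 4)
    (p : ℝ) (hp_mem : p ∈ Ioi (σ / (4 - σ)))
    (hp_pos : 0 < 16 * p ^ 2 - σ ^ 2 * (p + 1) ^ 2)
    (hp_eq : Real.exp p =
      Real.sqrt (16 - σ ^ 2) / Real.sqrt (16 * p ^ 2 - σ ^ 2 * (p + 1) ^ 2))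
    (L : ℝ) (hL : L = σ * (1 + p) * Real.exp p / Real.sqrt (16 - σ ^ 2)) :
    ∀ s ∈ Icc (0 : ℝ) t, |X s| ≤ L * Y s := by
  have hp0 : 0 < p := lt_trans (div_pos hσ0 (by linarith)) hp_mem
  obtain ⟨ℓ, K, hℓ, hK, hLK, hA, hB⟩ := params σ p L hσ0 hσ hp0 hp_pos hp_eq hL
  intro s hs
  rw [← hLK, abs_le']
  refine ⟨one_side σ ℓ K t hσ0 hℓ hK hA hB β hβ0 hβlip y X Y hXcont hYcont hYpos hX hY s hs, ?_⟩
  refine one_side σ ℓ K t hσ0 hℓ hK hA hB (fun s => -β s) (by simp [hβ0]) ?_ y (fun s => -X s) Y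
    hXcont.neg hYcont hYpos ?_ ?_ s hs
  · intro r hr s hs
    have := hβlip r hr s hs
    rw [← abs_neg] at this
    convert this using 2
    ring
  · intro s hs
    have := hX s hs
    simp only [neg_sq, mul_neg, neg_div, intervalIntegral.integral_neg]
    linarith
  · intro s hs
    simpa only [neg_sq] using hY s hs
end

section
/- Assume the reverse Loewner flow setup with 0 < σ < 4√2/π. Then | 4·∫₀ᵗ X(r)·Y(r)/(X(r)² + Y(r)²)² dr | ≤ (πσ·√(64 − π²σ²)/64)·log(y² + 4t) + (πσ·√(64 − π²σ²)/32)·log(1/y). -/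
open Set MeasureTheory intervalIntegral Real

theorem aux_hasDeriv {t c : ℝ} {f F : ℝ → ℝ} (hf : ContinuousOn f (Icc 0 t))
    (hF : ∀ s ∈ Icc (0 : ℝ) t, F s = c + ∫ r in (0 : ℝ)..s, f r) :
    ∀ s ∈ Ioo (0 : ℝ) t, HasDerivAt F (f s) s := by
  intro s hs
  have hnhds : Icc (0 : ℝ) t ∈ nhds s := Icc_mem_nhds hs.1 hs.2
  have h1 : HasDerivAt (fun s => ∫ r in (0 : ℝ)..s, f r) (f s) s := by
    apply intervalIntegral.integral_hasDerivAt_right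
    · apply ContinuousOn.intervalIntegrable
      rw [uIcc_of_le hs.1.le]
      exact hf.mono (Icc_subset_Icc le_rfl hs.2.le)
    · exact hf.stronglyMeasurableAtFilter_nhdsWithin measurableSet_Icc s |>.filter_mono
        (by rw [nhdsWithin_eq_nhds.2 hnhds])
    · exact hf.continuousAt hnhds
  refine (h1.const_add c).congr_of_eventuallyEq ?_
  filter_upwards [hnhds] with u hu using hF u hu

theorem aux_quarter (S : ℝ) (hS : 0 < S) :
    ∫ v in (0 : ℝ)..S, Real.sqrt (S ^ 2 - v ^ 2) = Real.pi * S ^ 2 / 4 := by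
  have h1 : ∫ v in (0 : ℝ)..1, Real.sqrt (1 - v ^ 2) = Real.pi / 4 := by
    have h := integral_sqrt_one_sub_sq
    have hc : Continuous fun v : ℝ => Real.sqrt (1 - v ^ 2) := by fun_prop
    rw [← intervalIntegral.integral_add_adjacent_intervals (hc.intervalIntegrable (-1) 0)
      (hc.intervalIntegrable 0 1)] at h
    have h2 : ∫ v in (-1 : ℝ)..0, Real.sqrt (1 - v ^ 2) = ∫ v in (0 : ℝ)..1, Real.sqrt (1 - v ^ 2) := by
      have := intervalIntegral.integral_comp_neg (a := 0) (b := 1) (fun v : ℝ => Real.sqrt (1 - v ^ 2))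
      simp only [neg_sq, neg_zero] at this
      exact this.symm
    rw [h2] at h
    linarith
  have h3 := intervalIntegral.mul_integral_comp_mul_left (a := 0) (b := 1) (c := S)
    (f := fun v : ℝ => Real.sqrt (S ^ 2 - v ^ 2))
  simp only [mul_zero, mul_one] at h3
  rw [← h3]
  have h4 : ∀ x : ℝ, Real.sqrt (S ^ 2 - (S * x) ^ 2) = S * Real.sqrt (1 - x ^ 2) := by
    intro x
    rw [show S ^ 2 - (S * x) ^ 2 = S ^ 2 * (1 - x ^ 2) by ring, Real.sqrt_mul (sq_nonneg S),
      Real.sqrt_sq hS.le]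
  simp only [h4, intervalIntegral.integral_const_mul, h1]
  ring

set_option maxHeartbeats 1000000 in
/-- Winding-rate estimate for the reverse Loewner flow in the range `0 < σ < 4√2/π`:
`|4∫₀ᵗ XY/(X²+Y²)² dr| ≤ (πσ√(64−π²σ²)/64)·log(y²+4t) + (πσ√(64−π²σ²)/32)·log(1/y)`. -/
theorem reverse_flow_winding_bound
    (σ t : ℝ) (hσ0 : 0 < σ) (ht : 0 < t)
    (β : ℝ → ℝ) (hβcont : ContinuousOn β (Icc 0 t)) (hβ0 : β 0 = 0)
    (hβlip : ∀ r ∈ Icc (0 : ℝ) t, ∀ s ∈ Icc (0 : ℝ) t, |β s - β r| ≤ σ * Real.sqrt |s - r|)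
    (y : ℝ) (hy : 0 < y)
    (X Y : ℝ → ℝ)
    (hXcont : ContinuousOn X (Icc 0 t)) (hYcont : ContinuousOn Y (Icc 0 t))
    (hYpos : ∀ s ∈ Icc (0 : ℝ) t, 0 < Y s)
    (hX : ∀ s ∈ Icc (0 : ℝ) t,
      X s = β s - ∫ r in (0 : ℝ)..s, 2 * X r / (X r ^ 2 + Y r ^ 2))
    (hY : ∀ s ∈ Icc (0 : ℝ) t,
      Y s = y + ∫ r in (0 : ℝ)..s, 2 * Y r / (X r ^ 2 + Y r ^ 2))
    (hσ : σ < 4 * Real.sqrt 2 / Real.pi) :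
    |4 * ∫ r in (0 : ℝ)..t, X r * Y r / (X r ^ 2 + Y r ^ 2) ^ 2| ≤
      Real.pi * σ * Real.sqrt (64 - Real.pi ^ 2 * σ ^ 2) / 64 * Real.log (y ^ 2 + 4 * t) +
        Real.pi * σ * Real.sqrt (64 - Real.pi ^ 2 * σ ^ 2) / 32 * Real.log (1 / y) := by
  have hq : ∀ s ∈ Icc (0 : ℝ) t, 0 < X s ^ 2 + Y s ^ 2 := fun s hs => by
    have := hYpos s hs
    positivity
  have hqc : ContinuousOn (fun r => X r ^ 2 + Y r ^ 2) (Icc 0 t) := by fun_prop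
  have hpXc : ContinuousOn (fun r => 2 * X r / (X r ^ 2 + Y r ^ 2)) (Icc 0 t) :=
    (by fun_prop : ContinuousOn (fun r => 2 * X r) (Icc 0 t)).div hqc fun s hs => (hq s hs).ne'
  have hpYc : ContinuousOn (fun r => 2 * Y r / (X r ^ 2 + Y r ^ 2)) (Icc 0 t) :=
    (by fun_prop : ContinuousOn (fun r => 2 * Y r) (Icc 0 t)).div hqc fun s hs => (hq s hs).ne'
  have hYd := aux_hasDeriv hpYc hY
  have hZd : ∀ s ∈ Ioo (0 : ℝ) t,
      HasDerivAt (fun u => X u - β u) (-(2 * X s / (X s ^ 2 + Y s ^ 2))) s := by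
    apply aux_hasDeriv (c := 0) (f := fun s => -(2 * X s / (X s ^ 2 + Y s ^ 2))) hpXc.neg
    intro s hs
    simp only [intervalIntegral.integral_neg]
    rw [hX s hs]; ring
  have h0m : (0 : ℝ) ∈ Icc (0 : ℝ) t := ⟨le_rfl, ht.le⟩
  have htm : t ∈ Icc (0 : ℝ) t := ⟨ht.le, le_rfl⟩
  have hX0 : X 0 = 0 := by rw [hX 0 h0m]; simp [hβ0]
  have hY0 : Y 0 = y := by rw [hY 0 h0m]; simp
  -- key identity
  have key : ∀ s ∈ Icc (0 : ℝ) t, X s * Y s = β s * y +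
      ∫ u in (0 : ℝ)..s, (β s - β u) * (2 * Y u / (X u ^ 2 + Y u ^ 2)) := by
    intro s hs
    have hsub : Icc (0 : ℝ) s ⊆ Icc 0 t := Icc_subset_Icc le_rfl hs.2
    have h := intervalIntegral.integral_eq_sub_of_hasDerivAt_of_le hs.1
      (f := fun u => (X u - β u) * Y u + β s * Y u)
      (f' := fun u => (β s - β u) * (2 * Y u / (X u ^ 2 + Y u ^ 2)))
      (by
        refine ContinuousOn.mono ?_ hsub
        fun_prop)
      (by
        intro u hu
        have hu' : u ∈ Ioo (0 : ℝ) t := ⟨hu.1, hu.2.trans_le hs.2⟩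
        refine HasDerivAt.congr_deriv
          (((hZd u hu').mul (hYd u hu')).add ((hYd u hu').const_mul (β s))) ?_
        ring)
      (by
        apply ContinuousOn.intervalIntegrable
        rw [uIcc_of_le hs.1]
        exact ((continuousOn_const.sub hβcont).mul hpYc).mono hsub)
    rw [h, hX0, hY0, hβ0]
    ring
  -- derivative of Y ^ 2
  have hwd : ∀ s ∈ Ioo (0 : ℝ) t,
      HasDerivAt (fun u => Y u ^ 2) (4 * (Y s ^ 2 / (X s ^ 2 + Y s ^ 2))) s := by
    intro s hs
    refine HasDerivAt.congr_deriv ((hYd s hs).pow 2) ?_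
    norm_num
    ring
  have hwle : Y t ^ 2 ≤ y ^ 2 + 4 * t := by
    have hm : MonotoneOn (fun u => 4 * u - Y u ^ 2) (Icc 0 t) := by
      apply monotoneOn_of_hasDerivWithinAt_nonneg (convex_Icc 0 t)
        (f' := fun s => 4 * 1 - (4 * (Y s ^ 2 / (X s ^ 2 + Y s ^ 2))))
      · fun_prop
      · intro s hs
        rw [interior_Icc] at hs
        exact (((hasDerivAt_id s).const_mul 4).sub (hwd s hs)).hasDerivWithinAt
      · intro s hs
        rw [interior_Icc] at hs
        have := div_le_one_of_le₀ (by nlinarith [sq_nonneg (X s)] : Y s ^ 2 ≤ X s ^ 2 + Y s ^ 2)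
          (hq s ⟨hs.1.le, hs.2.le⟩).le
        linarith
    have := hm h0m htm ht.le
    simp only [hY0] at this
    linarith
  -- the extremal point
  have hgc : ContinuousOn (fun r => X r ^ 2 / (X r ^ 2 + Y r ^ 2)) (Icc 0 t) :=
    (hXcont.pow 2).div hqc fun s hs => (hq s hs).ne'
  obtain ⟨s, hs, hmax⟩ := isCompact_Icc.exists_isMaxOn ⟨0, h0m⟩ hgc
  have hqs := hq s hs
  have hYs := hYpos s hs
  set q := X s ^ 2 + Y s ^ 2 with hqdef
  set C := Y s / Real.sqrt q with hCdef
  have hC : 0 < C := div_pos hYs (Real.sqrt_pos.2 hqs)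
  have hC2 : C ^ 2 = Y s ^ 2 / q := by rw [hCdef, div_pow, Real.sq_sqrt hqs.le]
  have hcos : ∀ u ∈ Icc (0 : ℝ) t, C ^ 2 ≤ Y u ^ 2 / (X u ^ 2 + Y u ^ 2) := by
    intro u hu
    have h1 : X u ^ 2 / (X u ^ 2 + Y u ^ 2) ≤ X s ^ 2 / q := hmax hu
    have h2 : X u ^ 2 / (X u ^ 2 + Y u ^ 2) + Y u ^ 2 / (X u ^ 2 + Y u ^ 2) = 1 := by
      rw [← add_div, div_self (hq u hu).ne']
    have h3 : X s ^ 2 / q + Y s ^ 2 / q = 1 := by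
      rw [← add_div, div_self hqs.ne']
    rw [hC2]; linarith
  have hwlow : ∀ u ∈ Icc (0 : ℝ) s, 4 * C ^ 2 * (s - u) ≤ Y s ^ 2 - Y u ^ 2 := by
    intro u hu
    have hm : MonotoneOn (fun u => Y u ^ 2 - 4 * C ^ 2 * u) (Icc 0 t) := by
      apply monotoneOn_of_hasDerivWithinAt_nonneg (convex_Icc 0 t)
        (f' := fun s => (4 * (Y s ^ 2 / (X s ^ 2 + Y s ^ 2))) - 4 * C ^ 2 * 1)
      · fun_prop
      · intro s hs
        rw [interior_Icc] at hs
        exact ((hwd s hs).sub ((hasDerivAt_id s).const_mul (4 * C ^ 2))).hasDerivWithinAt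
      · intro s hs
        rw [interior_Icc] at hs
        have := hcos s ⟨hs.1.le, hs.2.le⟩
        linarith
    have := hm ⟨hu.1, hu.2.trans hs.2⟩ hs hu.2
    simp only at this
    linarith
  have hsq : ∀ u ∈ Icc (0 : ℝ) s,
      Real.sqrt (s - u) ≤ Real.sqrt (Y s ^ 2 - Y u ^ 2) / (2 * C) := by
    intro u hu
    rw [le_div_iff₀ (by positivity)]
    apply Real.le_sqrt_of_sq_le
    rw [mul_pow, Real.sq_sqrt (by linarith [hu.2])]
    have := hwlow u hu
    linarith
  have hsubs : Icc (0 : ℝ) s ⊆ Icc 0 t := Icc_subset_Icc le_rfl hs.2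
  have hhc : Continuous fun v : ℝ => Real.sqrt (Y s ^ 2 - v ^ 2) := by fun_prop
  have hchange : ∫ u in (0 : ℝ)..s,
      Real.sqrt (Y s ^ 2 - Y u ^ 2) * (2 * Y u / (X u ^ 2 + Y u ^ 2)) =
      (∫ v in (0 : ℝ)..(Y s), Real.sqrt (Y s ^ 2 - v ^ 2)) -
        ∫ v in (0 : ℝ)..y, Real.sqrt (Y s ^ 2 - v ^ 2) := by
    have hGd : ∀ x, HasDerivAt (fun x => ∫ v in (0 : ℝ)..x, Real.sqrt (Y s ^ 2 - v ^ 2))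
        (Real.sqrt (Y s ^ 2 - x ^ 2)) x := fun x =>
      intervalIntegral.integral_hasDerivAt_right (hhc.intervalIntegrable _ _)
        (hhc.stronglyMeasurableAtFilter _ _) hhc.continuousAt
    have hGc : Continuous (fun x => ∫ v in (0 : ℝ)..x, Real.sqrt (Y s ^ 2 - v ^ 2)) :=
      continuous_iff_continuousAt.2 fun x => (hGd x).continuousAt
    have h := intervalIntegral.integral_eq_sub_of_hasDerivAt_of_le hs.1
      (f := fun u => ∫ v in (0 : ℝ)..(Y u), Real.sqrt (Y s ^ 2 - v ^ 2))
      (f' := fun u => Real.sqrt (Y s ^ 2 - Y u ^ 2) * (2 * Y u / (X u ^ 2 + Y u ^ 2)))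
      (hGc.comp_continuousOn (hYcont.mono hsubs))
      (fun u hu => (hGd (Y u)).comp u (hYd u ⟨hu.1, hu.2.trans_le hs.2⟩))
      (by
        apply ContinuousOn.intervalIntegrable
        rw [uIcc_of_le hs.1]
        exact ((hhc.comp_continuousOn hYcont).mul hpYc).mono hsubs)
    rw [h, hY0]
  have hylow : y * Real.sqrt (Y s ^ 2 - y ^ 2) ≤
      ∫ v in (0 : ℝ)..y, Real.sqrt (Y s ^ 2 - v ^ 2) := by
    have h : ∫ v in (0 : ℝ)..y, Real.sqrt (Y s ^ 2 - y ^ 2) ≤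
        ∫ v in (0 : ℝ)..y, Real.sqrt (Y s ^ 2 - v ^ 2) := by
      apply intervalIntegral.integral_mono_on hy.le (by simp) (hhc.intervalIntegrable _ _)
      intro v hv
      apply Real.sqrt_le_sqrt
      nlinarith [hv.1, hv.2]
    simpa using h
  have hintb : |∫ u in (0 : ℝ)..s, (β s - β u) * (2 * Y u / (X u ^ 2 + Y u ^ 2))| ≤
      ∫ u in (0 : ℝ)..s, σ / (2 * C) *
        (Real.sqrt (Y s ^ 2 - Y u ^ 2) * (2 * Y u / (X u ^ 2 + Y u ^ 2))) := by
    rw [← Real.norm_eq_abs]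
    apply intervalIntegral.norm_integral_le_of_norm_le hs.1
    · refine Filter.Eventually.of_forall fun u hu => ?_
      have hu' : u ∈ Icc (0 : ℝ) s := ⟨hu.1.le, hu.2⟩
      have hpos : 0 ≤ 2 * Y u / (X u ^ 2 + Y u ^ 2) := by
        have := hYpos u (hsubs hu')
        positivity
      rw [norm_mul, Real.norm_eq_abs, Real.norm_eq_abs, abs_of_nonneg hpos, ← mul_assoc]
      apply mul_le_mul_of_nonneg_right _ hpos
      have h1 := hβlip u (hsubs hu') s hs
      rw [abs_of_nonneg (by linarith [hu.2] : 0 ≤ s - u)] at h1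
      calc _ ≤ _ := h1
        _ ≤ σ * (Real.sqrt (Y s ^ 2 - Y u ^ 2) / (2 * C)) :=
          mul_le_mul_of_nonneg_left (hsq u hu') hσ0.le
        _ = _ := by ring
    · apply ContinuousOn.intervalIntegrable
      rw [uIcc_of_le hs.1]
      exact (continuousOn_const.mul ((hhc.comp_continuousOn hYcont).mul hpYc)).mono hsubs
  rw [intervalIntegral.integral_const_mul, hchange, aux_quarter _ hYs] at hintb
  have hβs : |β s * y| ≤ σ / (2 * C) * ∫ v in (0 : ℝ)..y, Real.sqrt (Y s ^ 2 - v ^ 2) := by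
    have h1 := hβlip 0 h0m s hs
    rw [hβ0, sub_zero, sub_zero, abs_of_nonneg hs.1] at h1
    have h2 := hsq 0 ⟨le_rfl, hs.1⟩
    rw [sub_zero, hY0] at h2
    rw [abs_mul, abs_of_pos hy]
    calc _ ≤ σ * (Real.sqrt (Y s ^ 2 - y ^ 2) / (2 * C)) * y := by gcongr; exact h1.trans (by gcongr)
      _ = σ / (2 * C) * (y * Real.sqrt (Y s ^ 2 - y ^ 2)) := by ring
      _ ≤ _ := mul_le_mul_of_nonneg_left hylow (by positivity)
  have hXY : |X s| * Y s ≤ σ / (2 * C) * (Real.pi * Y s ^ 2 / 4) := by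
    have h1 : |X s| * Y s = |X s * Y s| := by rw [abs_mul, abs_of_pos hYs]
    rw [h1, key s hs]
    refine (abs_add_le _ _).trans ?_
    linarith
  have hXm : |X s| ≤ Real.pi * σ / 8 * Real.sqrt q := by
    have hsqpos := Real.sqrt_pos.2 hqs
    have h1 : σ / (2 * C) * (Real.pi * Y s ^ 2 / 4) = (Real.pi * σ / 8 * Real.sqrt q) * Y s := by
      rw [hCdef]; field_simp; ring
    rw [h1] at hXY
    exact le_of_mul_le_mul_right hXY hYs
  set m := Real.pi * σ / 8 with hm
  have hm0 : 0 < m := by positivity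
  have hm2 : m ^ 2 ≤ 1 / 2 := by
    rw [lt_div_iff₀ Real.pi_pos] at hσ
    have h8 : m ≤ Real.sqrt 2 / 2 := by rw [hm]; linarith
    have h2 := Real.sq_sqrt (show (0 : ℝ) ≤ 2 by norm_num)
    nlinarith [Real.sqrt_nonneg 2]
  have hXs2 : X s ^ 2 / q ≤ m ^ 2 := by
    rw [div_le_iff₀ hqs]
    have := pow_le_pow_left₀ (abs_nonneg _) hXm 2
    rwa [sq_abs, mul_pow, Real.sq_sqrt hqs.le] at this
  set K := m * Real.sqrt (1 - m ^ 2) with hK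
  have hK0 : 0 ≤ K := by positivity
  have hK2 : K ^ 2 = m ^ 2 * (1 - m ^ 2) := by
    rw [hK, mul_pow, Real.sq_sqrt (by linarith)]
  have hpt : ∀ u ∈ Icc (0 : ℝ) t, |X u * Y u| ≤ K * (X u ^ 2 + Y u ^ 2) := by
    intro u hu
    have hqu := hq u hu
    apply abs_le_of_sq_le_sq _ (by positivity)
    have h1 : X u ^ 2 / (X u ^ 2 + Y u ^ 2) ≤ m ^ 2 := le_trans (hmax hu) hXs2
    rw [div_le_iff₀ hqu] at h1
    rw [mul_pow, mul_pow, hK2]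
    have h3 : 0 ≤ (m ^ 2 * (X u ^ 2 + Y u ^ 2) - X u ^ 2) *
        ((1 - m ^ 2) * (X u ^ 2 + Y u ^ 2) - X u ^ 2) := by
      apply mul_nonneg (by linarith)
      have := mul_le_mul_of_nonneg_right hm2 hqu.le
      linarith
    linarith only [h3, show (m ^ 2 * (X u ^ 2 + Y u ^ 2) - X u ^ 2) *
        ((1 - m ^ 2) * (X u ^ 2 + Y u ^ 2) - X u ^ 2) =
        m ^ 2 * (1 - m ^ 2) * (X u ^ 2 + Y u ^ 2) ^ 2 - X u ^ 2 * Y u ^ 2 by ring]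
  have hlog : ∫ u in (0 : ℝ)..t, 2 / (X u ^ 2 + Y u ^ 2) = Real.log (Y t) - Real.log y := by
    have h := intervalIntegral.integral_eq_sub_of_hasDerivAt_of_le ht.le
      (f := fun u => Real.log (Y u)) (f' := fun u => 2 / (X u ^ 2 + Y u ^ 2))
      (hYcont.log fun u hu => (hYpos u hu).ne')
      (by
        intro u hu
        have hu' : u ∈ Icc (0 : ℝ) t := ⟨hu.1.le, hu.2.le⟩
        have h1 := hYpos u hu'
        have h2 := hq u hu'
        refine HasDerivAt.congr_deriv ((hYd u hu).log h1.ne') ?_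
        field_simp)
      (by
        apply ContinuousOn.intervalIntegrable
        rw [uIcc_of_le ht.le]
        exact continuousOn_const.div hqc fun s hs => (hq s hs).ne')
    rw [h, hY0]
  have hfin : |4 * ∫ r in (0 : ℝ)..t, X r * Y r / (X r ^ 2 + Y r ^ 2) ^ 2| ≤
      2 * K * (Real.log (Y t) - Real.log y) := by
    rw [← hlog, ← intervalIntegral.integral_const_mul, ← intervalIntegral.integral_const_mul,
      ← Real.norm_eq_abs]
    apply intervalIntegral.norm_integral_le_of_norm_le ht.le
    · refine Filter.Eventually.of_forall fun u hu => ?_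
      have hu' : u ∈ Icc (0 : ℝ) t := ⟨hu.1.le, hu.2⟩
      have hqu := hq u hu'
      rw [Real.norm_eq_abs, abs_mul, abs_div, abs_of_pos (pow_pos hqu 2),
        abs_of_pos (by norm_num : (0 : ℝ) < 4)]
      have h1 : |X u * Y u| / (X u ^ 2 + Y u ^ 2) ^ 2 ≤
          K * (X u ^ 2 + Y u ^ 2) / (X u ^ 2 + Y u ^ 2) ^ 2 := by
        gcongr
        exact hpt u hu'
      have h2 : K * (X u ^ 2 + Y u ^ 2) / (X u ^ 2 + Y u ^ 2) ^ 2 = K / (X u ^ 2 + Y u ^ 2) := by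
        field_simp
      rw [h2] at h1
      calc _ ≤ 4 * (K / (X u ^ 2 + Y u ^ 2)) := by linarith
        _ = _ := by ring
    · apply ContinuousOn.intervalIntegrable
      rw [uIcc_of_le ht.le]
      exact continuousOn_const.mul (continuousOn_const.div hqc fun s hs => (hq s hs).ne')
  have hlogle : 2 * Real.log (Y t) ≤ Real.log (y ^ 2 + 4 * t) := by
    have h1 := Real.log_le_log (pow_pos (hYpos t htm) 2) hwle
    rw [Real.log_pow] at h1
    exact_mod_cast h1
  have hS : Real.sqrt (64 - Real.pi ^ 2 * σ ^ 2) = 8 * Real.sqrt (1 - m ^ 2) := by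
    rw [show 64 - Real.pi ^ 2 * σ ^ 2 = 8 ^ 2 * (1 - m ^ 2) by rw [hm]; ring,
      Real.sqrt_mul (by norm_num), Real.sqrt_sq (by norm_num)]
  have e1 : Real.pi * σ * Real.sqrt (64 - Real.pi ^ 2 * σ ^ 2) / 64 = K := by
    rw [hS, hK, hm]; ring
  have e2 : Real.pi * σ * Real.sqrt (64 - Real.pi ^ 2 * σ ^ 2) / 32 = 2 * K := by
    rw [← e1]; ring
  rw [e1, e2, one_div, Real.log_inv]
  nlinarith [mul_le_mul_of_nonneg_left hlogle hK0]
end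

section
/- Assume the Loewner chain setup with 0 < σ < 4. Let p ∈ (σ/(4−σ), ∞) satisfy e^p = √(16−σ²)/√(16p² − σ²(p+1)²), and set L_σ = σ·(1+p)·e^p/√(16−σ²). Then, for every t ∈ [0,1], |Re γ(t)| ≤ L_σ·Im γ(t). -/
open Set MeasureTheory intervalIntegral Real


/-- If each branch of a maximum is non-increasing whenever it is active, the maximum does not grow. -/
lemma max_le_of_active_branch (α β : ℝ) (hαβ : α ≤ β) (G₁ G₂ g₁ g₂ : ℝ → ℝ)
    (h₁ : ∀ s ∈ Icc α β, HasDerivWithinAt G₁ (g₁ s) (Icc α β) s)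
    (h₂ : ∀ s ∈ Icc α β, HasDerivWithinAt G₂ (g₂ s) (Icc α β) s)
    (a₁ : ∀ s ∈ Icc α β, G₂ s ≤ G₁ s → g₁ s ≤ 0)
    (a₂ : ∀ s ∈ Icc α β, G₁ s ≤ G₂ s → g₂ s ≤ 0) :
    max (G₁ β) (G₂ β) ≤ max (G₁ α) (G₂ α) := by
  have c₁ : ContinuousOn G₁ (Icc α β) := fun s hs => (h₁ s hs).continuousWithinAt
  have c₂ : ContinuousOn G₂ (Icc α β) := fun s hs => (h₂ s hs).continuousWithinAt
  have key : ∀ (G H g : ℝ → ℝ), (∀ s ∈ Icc α β, HasDerivWithinAt G (g s) (Icc α β) s) →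
      (∀ s ∈ Icc α β, H s ≤ G s → g s ≤ 0) → ∀ x ∈ Ico α β, ∀ r > 0,
      ∀ᶠ z in nhdsWithin x (Ioi x), G z < max (G x) (H x) + r * (z - x) := by
    intro G H g hG hg x hx r hr
    have hxI : x ∈ Icc α β := ⟨hx.1, hx.2.le⟩
    have hd : HasDerivWithinAt G (g x) (Ioi x) x :=
      (hG x hxI).mono_of_mem_nhdsWithin (Filter.mem_of_superset (Ioo_mem_nhdsGT hx.2)
        (fun z hz => ⟨hx.1.trans hz.1.le, hz.2.le⟩))
    rcases lt_or_ge (G x) (H x) with hlt | hge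
    · have := hd.continuousWithinAt.eventually_lt_const hlt
      filter_upwards [this, self_mem_nhdsWithin] with z hz hz'
      have : 0 < r * (z - x) := mul_pos hr (sub_pos.2 hz')
      have := le_max_right (G x) (H x)
      linarith
    · have h0 := hg x hxI hge
      have ht := hasDerivWithinAt_iff_tendsto_slope' (by simp : x ∉ Ioi x) |>.1 hd
      have := ht.eventually_lt_const (lt_of_le_of_lt h0 hr)
      filter_upwards [this, self_mem_nhdsWithin] with z hz hz'
      have hzx : 0 < z - x := sub_pos.2 hz'
      rw [slope_def_field, div_lt_iff₀ hzx] at hz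
      have := le_max_left (G x) (H x)
      linarith
  have := image_le_of_liminf_slope_right_le_deriv_boundary (f := fun s => max (G₁ s) (G₂ s))
    (a := α) (b := β) (c₁.sup c₂) (B := fun _ => max (G₁ α) (G₂ α)) (B' := fun _ => 0) le_rfl
    continuousOn_const (fun x _ => hasDerivWithinAt_const _ _ _) ?_ (right_mem_Icc.2 hαβ)
  · exact this
  · intro x hx r hr
    apply Filter.Eventually.frequently
    filter_upwards [key G₁ G₂ g₁ h₁ a₁ x hx r hr, key G₂ G₁ g₂ h₂ a₂ x hx r hr,
      self_mem_nhdsWithin] with z hz1 hz2 hz'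
    have hzx : 0 < z - x := sub_pos.2 hz'
    rw [slope_def_field, div_lt_iff₀ hzx, sub_lt_iff_lt_add']
    rw [max_comm] at hz2
    exact max_lt hz1 hz2

/-- The algebraic inequality behind the barrier. -/
lemma barrier_poly (σ a U Y : ℝ) (hσ : 0 < σ) (hσ4 : σ < 4) (h8 : 8 ≤ σ ^ 2) (ha : 0 ≤ a)
    (hU : 0 ≤ U) (hab : a ≤ σ / 2) (haU : a + U ≤ σ) (hY0 : 0 < Y) (hY : Y ≤ 4 - σ ^ 2 / 4) :
    (U ^ 2 + Y) - 4 - 2 * (4 * σ / (16 - σ ^ 2)) * U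
      + (4 * σ / (16 - σ ^ 2)) * a * (U ^ 2 + Y) / 2 ≤ 0 := by
  have hD : 0 < 16 - σ ^ 2 := by nlinarith
  have e : (U ^ 2 + Y) - 4 - 2 * (4 * σ / (16 - σ ^ 2)) * U
      + (4 * σ / (16 - σ ^ 2)) * a * (U ^ 2 + Y) / 2 =
      ((U ^ 2 + Y) * (16 - σ ^ 2 + 2 * σ * a) - 4 * (16 - σ ^ 2) - 8 * σ * U) / (16 - σ ^ 2) := by
    field_simp; ring
  rw [e]
  apply div_nonpos_of_nonpos_of_nonneg _ hD.le
  have hf : 0 ≤ 16 - σ ^ 2 + 2 * σ * a := by positivity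
  have h1 : (U ^ 2 + Y) * (16 - σ ^ 2 + 2 * σ * a) ≤
      (U ^ 2 + (4 - σ ^ 2 / 4)) * (16 - σ ^ 2 + 2 * σ * a) :=
    mul_le_mul_of_nonneg_right (by linarith) hf
  have hT : 0 ≤ U ^ 2 + (4 - σ ^ 2 / 4) := by nlinarith
  rcases le_total U (σ / 2) with hU2 | hU2
  · have h2 : (U ^ 2 + (4 - σ ^ 2 / 4)) * (16 - σ ^ 2 + 2 * σ * a) ≤
        (U ^ 2 + (4 - σ ^ 2 / 4)) * 16 :=
      mul_le_mul_of_nonneg_left (by nlinarith) hT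
    nlinarith [mul_nonneg hU (sub_nonneg.2 hU2)]
  · have h2 : (U ^ 2 + (4 - σ ^ 2 / 4)) * (16 - σ ^ 2 + 2 * σ * a) ≤
        (U ^ 2 + (4 - σ ^ 2 / 4)) * (16 - σ ^ 2 + 2 * σ * (σ - U)) :=
      mul_le_mul_of_nonneg_left (by nlinarith) hT
    have h3 : (U ^ 2 + (4 - σ ^ 2 / 4)) * (16 - σ ^ 2 + 2 * σ * (σ - U)) - 4 * (16 - σ ^ 2)
        - 8 * σ * U = (U - σ / 2) ^ 2 * (16 - 2 * σ ^ 2 - 2 * σ * (U - σ / 2)) := by ring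
    have h4 : (U - σ / 2) ^ 2 * (16 - 2 * σ ^ 2 - 2 * σ * (U - σ / 2)) ≤ 0 :=
      mul_nonpos_of_nonneg_of_nonpos (sq_nonneg _)
        (by nlinarith [mul_nonneg hσ.le (sub_nonneg.2 hU2)])
    linarith

lemma window_mono (α β : ℝ) (X d : ℝ → ℝ)
    (hX : ∀ s ∈ Icc α β, HasDerivWithinAt X (d s) (Icc α β) s)
    (hd : ∀ s ∈ Icc α β, 0 ≤ d s) : MonotoneOn X (Icc α β) := by
  apply monotoneOn_of_hasDerivWithinAt_nonneg (convex_Icc α β)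
    (fun s hs => (hX s hs).continuousWithinAt) (f' := d)
  · intro s hs
    exact (hX s (interior_subset hs)).mono interior_subset
  · intro s hs
    exact hd s (interior_subset hs)

/-- Main barrier on a window where the real displacement keeps its sign. -/
lemma window_barrier (σ : ℝ) (hσ : 0 < σ) (hσ4 : σ < 4) (h8 : 8 ≤ σ ^ 2)
    (α β : ℝ) (hαβ : α < β) (X y u : ℝ → ℝ)
    (hX : ∀ s ∈ Icc α β, HasDerivWithinAt X (2 * u s / (u s ^ 2 + y s ^ 2)) (Icc α β) s)
    (hy : ∀ s ∈ Icc α β, HasDerivWithinAt y (2 * y s / (u s ^ 2 + y s ^ 2)) (Icc α β) s)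
    (hypos : ∀ s ∈ Icc α β, 0 < y s) (hu : ∀ s ∈ Icc α β, 0 ≤ u s) (hX0 : X α = 0)
    (hc : ∀ s ∈ Icc α β, X s + u s ≤ σ * √(s - α)) :
    ∃ a, 0 ≤ a ∧ a ≤ σ ∧ u β ≤ 2 / √(16 - σ ^ 2) *
      Real.exp (2 * σ / (16 - σ ^ 2) * min a (σ / 2)) * (σ - a) * y β := by
  have hD : 0 < 16 - σ ^ 2 := by nlinarith
  have hmX := window_mono α β X _ hX (fun s hs => by have := hu s hs; positivity)
  have hXnn : ∀ s ∈ Icc α β, 0 ≤ X s := fun s hs => by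
    rw [← hX0]; exact hmX (left_mem_Icc.2 hαβ.le) hs hs.1
  have hβ : β ∈ Icc α β := right_mem_Icc.2 hαβ.le
  have hq : 0 < β - α := sub_pos.2 hαβ
  have hsq : 0 < √(β - α) := sqrt_pos.2 hq
  have ha0 : 0 ≤ X β / √(β - α) := div_nonneg (hXnn β hβ) hsq.le
  have hua : u β ≤ √(β - α) * (σ - X β / √(β - α)) := by
    have := hc β hβ
    have e : √(β - α) * (σ - X β / √(β - α)) = σ * √(β - α) - X β := by field_simp
    rw [e]; linarith
  have haσ : X β / √(β - α) ≤ σ := by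
    rw [div_le_iff₀ hsq]; linarith [hc β hβ, hu β hβ]
  refine ⟨X β / √(β - α), ha0, haσ, hua.trans ?_⟩
  -- the bound on elapsed time
  suffices hQ : β - α ≤ 4 / (16 - σ ^ 2) *
      Real.exp (4 * σ / (16 - σ ^ 2) * min (X β / √(β - α)) (σ / 2)) * y β ^ 2 by
    have hs : √(β - α) ≤ 2 / √(16 - σ ^ 2) *
        Real.exp (2 * σ / (16 - σ ^ 2) * min (X β / √(β - α)) (σ / 2)) * y β := by
      apply Real.sqrt_le_iff.2
      constructor
      · have := hypos β hβ
        positivity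
      · refine hQ.trans (le_of_eq ?_)
        rw [mul_pow, mul_pow, div_pow, sq_sqrt hD.le, ← Real.exp_nat_mul]
        have e1 : ((2 : ℕ) : ℝ) * (2 * σ / (16 - σ ^ 2) * min (X β / √(β - α)) (σ / 2)) =
            4 * σ / (16 - σ ^ 2) * min (X β / √(β - α)) (σ / 2) := by push_cast; ring
        rw [e1]; norm_num
    calc _ ≤ (2 / √(16 - σ ^ 2) *
        Real.exp (2 * σ / (16 - σ ^ 2) * min (X β / √(β - α)) (σ / 2)) * y β) *
          (σ - X β / √(β - α)) := mul_le_mul_of_nonneg_right hs (by linarith)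
      _ = _ := by ring
  have hcX : ContinuousOn X (Icc α β) := fun s hs => (hX s hs).continuousWithinAt
  have hcy : ContinuousOn y (Icc α β) := fun s hs => (hy s hs).continuousWithinAt
  set c := 4 * σ / (16 - σ ^ 2) with hcdef
  have hcpos : 0 < c := by positivity
  by_cases hsmall : β - α ≤ 4 / (16 - σ ^ 2) * y β ^ 2
  · refine hsmall.trans ?_
    have : 1 ≤ Real.exp (c * min (X β / √(β - α)) (σ / 2)) :=
      Real.one_le_exp (mul_nonneg hcpos.le (le_min ha0 (by linarith)))
    have h4 : 0 ≤ 4 / (16 - σ ^ 2) := by positivity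
    gcongr
    exact le_mul_of_one_le_right h4 this
  push Not at hsmall
  -- last time at which the ratio is small
  let K : Set ℝ := {s ∈ Icc α β | s - α ≤ 4 / (16 - σ ^ 2) * y s ^ 2}
  have hKcl : IsCompact K := by
    have : K = Icc α β ∩ {s ∈ Icc α β | s - α ≤ 4 / (16 - σ ^ 2) * y s ^ 2} := by
      ext s; simp [K]
    apply isCompact_Icc.of_isClosed_subset _ (fun s hs => hs.1)
    apply isClosed_Icc.isClosed_le (by fun_prop) (by fun_prop)
  have hKne : K.Nonempty := ⟨α, left_mem_Icc.2 hαβ.le, by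
    rw [sub_self]; positivity⟩
  obtain ⟨τ, hτK, hτmax⟩ := hKcl.exists_isGreatest hKne
  have hτβ : τ < β := lt_of_le_of_ne hτK.1.2 (fun h => by
    have := hτK.2; rw [h] at this; linarith)
  have hgt : ∀ s ∈ Ioc τ β, 4 / (16 - σ ^ 2) * y s ^ 2 < s - α := by
    intro s hs
    by_contra h
    push Not at h
    have := hτmax (show s ∈ K from ⟨⟨hτK.1.1.trans hs.1.le, hs.2⟩, h⟩)
    linarith [hs.1]
  have hge : ∀ s ∈ Icc τ β, 4 / (16 - σ ^ 2) * y s ^ 2 ≤ s - α := by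
    have hsub : Icc τ β ⊆ Icc α β := Icc_subset_Icc_left hτK.1.1
    intro s hs
    have hcl : s ∈ closure (Ioc τ β) := by rw [closure_Ioc hτβ.ne]; exact hs
    refine ContinuousWithinAt.closure_le hcl ?_ ?_ (fun s hs => (hgt s hs).le)
    · exact (((hcy s (hsub hs)).mono (Ioc_subset_Icc_self.trans hsub)).pow 2).const_mul _
    · fun_prop
  have hsub : Icc τ β ⊆ Icc α β := Icc_subset_Icc_left hτK.1.1
  have hqpos : ∀ s ∈ Icc τ β, 0 < s - α := fun s hs =>
    lt_of_lt_of_le (by have := hypos s (hsub hs); positivity) (hge s hs)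
  have hLder : ∀ s ∈ Icc τ β, HasDerivWithinAt (fun s => Real.log (s - α) - 2 * Real.log (y s))
      (1 / (s - α) - 2 * ((2 * y s / (u s ^ 2 + y s ^ 2)) / y s)) (Icc τ β) s := by
    intro s hs
    have h1 : HasDerivWithinAt (fun s : ℝ => s - α) 1 (Icc τ β) s :=
      (hasDerivWithinAt_id s _).sub_const α
    exact (h1.log (hqpos s hs).ne').sub
      ((((hy s (hsub hs)).mono hsub).log (hypos s (hsub hs)).ne').const_mul 2)
  have hader : ∀ s ∈ Icc τ β, HasDerivWithinAt (fun s => X s / √(s - α))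
      ((2 * u s / (u s ^ 2 + y s ^ 2) * √(s - α) - X s * (1 / (2 * √(s - α)))) / √(s - α) ^ 2)
      (Icc τ β) s := by
    intro s hs
    have h1 : HasDerivWithinAt (fun s : ℝ => s - α) 1 (Icc τ β) s :=
      (hasDerivWithinAt_id s _).sub_const α
    exact ((hX s (hsub hs)).mono hsub).div (h1.sqrt (hqpos s hs).ne')
      (sqrt_pos.2 (hqpos s hs)).ne'
  have hmax := max_le_of_active_branch τ β hτβ.le
    (fun s => Real.log (s - α) - 2 * Real.log (y s) - c * (X s / √(s - α)))
    (fun s => Real.log (s - α) - 2 * Real.log (y s) - c * (σ / 2)) _ _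
    (fun s hs => (hLder s hs).sub ((hader s hs).const_mul c))
    (fun s hs => (hLder s hs).sub_const _) ?_ ?_
  rotate_left
  · intro s hs hle
    have hab : X s / √(s - α) ≤ σ / 2 := by
      have : c * (X s / √(s - α)) ≤ c * (σ / 2) := by linarith
      exact le_of_mul_le_mul_left this hcpos
    have hr : 0 < √(s - α) := sqrt_pos.2 (hqpos s hs)
    have hr2 : √(s - α) ^ 2 = s - α := sq_sqrt (hqpos s hs).le
    have hyp := hypos s (hsub hs)
    have hun := hu s (hsub hs)
    have hYle : y s ^ 2 / √(s - α) ^ 2 ≤ 4 - σ ^ 2 / 4 := by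
      rw [hr2, div_le_iff₀ (hqpos s hs)]
      have := hge s hs
      rw [div_mul_eq_mul_div, div_le_iff₀ hD] at this
      nlinarith
    have hp := barrier_poly σ (X s / √(s - α)) (u s / √(s - α)) (y s ^ 2 / √(s - α) ^ 2) hσ hσ4 h8
      (div_nonneg (hXnn s (hsub hs)) hr.le) (div_nonneg hun hr.le) hab
      (by rw [← add_div, div_le_iff₀ hr]; exact hc s (hsub hs)) (by positivity) hYle
    rw [← hcdef] at hp
    rw [← hr2]
    rw [Real.sqrt_sq hr.le]
    set r := √(s - α) with hrdef
    clear_value r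
    have e : 1 / r ^ 2 - 2 * (2 * y s / (u s ^ 2 + y s ^ 2) / y s) -
        c * ((2 * u s / (u s ^ 2 + y s ^ 2) * r - X s * (1 / (2 * r))) / r ^ 2) =
        (((u s / r) ^ 2 + y s ^ 2 / r ^ 2) - 4 - 2 * c * (u s / r)
      + c * (X s / r) * ((u s / r) ^ 2 + y s ^ 2 / r ^ 2) / 2) / (u s ^ 2 + y s ^ 2) := by
      have : u s ^ 2 + y s ^ 2 ≠ 0 := by positivity
      field_simp
      ring
    rw [e]
    exact div_nonpos_of_nonpos_of_nonneg hp (by positivity)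
  · intro s hs hle
    have hab : σ / 2 ≤ X s / √(s - α) := by
      have : c * (σ / 2) ≤ c * (X s / √(s - α)) := by linarith
      exact le_of_mul_le_mul_left this hcpos
    have hr : 0 < √(s - α) := sqrt_pos.2 (hqpos s hs)
    have hr2 : √(s - α) ^ 2 = s - α := sq_sqrt (hqpos s hs).le
    have hyp := hypos s (hsub hs)
    have hun := hu s (hsub hs)
    rw [le_div_iff₀ hr] at hab
    have hu2 : u s ≤ σ / 2 * √(s - α) := by linarith [hc s (hsub hs)]
    have hu3 : u s ^ 2 ≤ (σ / 2 * √(s - α)) ^ 2 := by gcongr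
    have hg := hge s hs
    rw [div_mul_eq_mul_div, div_le_iff₀ hD] at hg
    have hT : u s ^ 2 + y s ^ 2 ≤ 4 * (s - α) := by
      rw [mul_pow, hr2] at hu3
      nlinarith
    have hTp : 0 < u s ^ 2 + y s ^ 2 := by positivity
    have e : 1 / (s - α) - 2 * (2 * y s / (u s ^ 2 + y s ^ 2) / y s) =
        (u s ^ 2 + y s ^ 2 - 4 * (s - α)) / ((s - α) * (u s ^ 2 + y s ^ 2)) := by
      have := (hqpos s hs).ne'
      field_simp
      ring
    rw [e]
    exact div_nonpos_of_nonpos_of_nonneg (by linarith)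
      (mul_nonneg (hqpos s hs).le hTp.le)
  have hτI : τ ∈ Icc τ β := left_mem_Icc.2 hτβ.le
  have hyτ := hypos τ hτK.1
  have hyβ := hypos β hβ
  have hstart : Real.log (τ - α) - 2 * Real.log (y τ) ≤ Real.log (4 / (16 - σ ^ 2)) := by
    have h := Real.log_le_log (hqpos τ hτI) hτK.2
    rw [Real.log_mul (by positivity) (by positivity), Real.log_pow] at h
    push_cast at h
    linarith
  have haτ : 0 ≤ X τ / √(τ - α) := div_nonneg (hXnn τ hτK.1) (sqrt_nonneg _)
  have hR : max (Real.log (τ - α) - 2 * Real.log (y τ) - c * (X τ / √(τ - α)))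
      (Real.log (τ - α) - 2 * Real.log (y τ) - c * (σ / 2)) ≤ Real.log (4 / (16 - σ ^ 2)) := by
    apply max_le
    · have := mul_nonneg hcpos.le haτ
      linarith
    · have : 0 ≤ c * (σ / 2) := by positivity
      linarith
  have hfin : Real.log (β - α) - 2 * Real.log (y β) - c * min (X β / √(β - α)) (σ / 2) ≤
      Real.log (4 / (16 - σ ^ 2)) := by
    refine le_trans ?_ (hmax.trans hR)
    rcases min_cases (X β / √(β - α)) (σ / 2) with h | h
    · rw [h.1]; exact le_max_left _ _
    · rw [h.1]; exact le_max_right _ _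
  rw [← Real.log_le_log_iff hq (by positivity), Real.log_mul (by positivity) (by positivity),
    Real.log_mul (by positivity) (by positivity), Real.log_exp, Real.log_pow]
  push_cast
  linarith

/-- Elementary estimate: bounded slope controls the elapsed time by the height. -/
lemma window_time (M : ℝ) (α β : ℝ) (hαβ : α ≤ β) (y u : ℝ → ℝ)
    (hy : ∀ s ∈ Icc α β, HasDerivWithinAt y (2 * y s / (u s ^ 2 + y s ^ 2)) (Icc α β) s)
    (hypos : ∀ s ∈ Icc α β, 0 < y s) (hu : ∀ s ∈ Icc α β, |u s| ≤ M * y s) :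
    4 * (β - α) ≤ (1 + M ^ 2) * y β ^ 2 := by
  have hm := window_mono α β (fun s => (1 + M ^ 2) * y s ^ 2 - 4 * s) _
    (fun s hs => (((hy s hs).pow 2).const_mul (1 + M ^ 2)).sub
      ((hasDerivWithinAt_id s _).const_mul 4)) ?_
  · have h := hm (left_mem_Icc.2 hαβ) (right_mem_Icc.2 hαβ) hαβ
    have := hypos α (left_mem_Icc.2 hαβ)
    have : 0 ≤ (1 + M ^ 2) * y α ^ 2 := by positivity
    simp only at h
    linarith
  · intro s hs
    have hyp := hypos s hs
    have h1 : u s ^ 2 ≤ (M * y s) ^ 2 := by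
      rw [← sq_abs]; gcongr; exact hu s hs
    have hT : 0 < u s ^ 2 + y s ^ 2 := by positivity
    have e : (1 + M ^ 2) * (((2 : ℕ) : ℝ) * y s ^ (2 - 1) * (2 * y s / (u s ^ 2 + y s ^ 2))) - 4 * 1
        = 4 * ((1 + M ^ 2) * y s ^ 2 - (u s ^ 2 + y s ^ 2)) / (u s ^ 2 + y s ^ 2) := by
      field_simp
      push_cast
      ring
    rw [e]
    apply div_nonneg _ hT.le
    nlinarith


/-- Local bound for self-maps of the upper half plane. -/
lemma half_plane_local_bound (g : ℂ → ℂ) (z₀ : ℂ) (hz₀ : 0 < z₀.im)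
    (hd : DifferentiableOn ℂ g {z : ℂ | 0 < z.im})
    (hm : MapsTo g {z : ℂ | 0 < z.im} {z : ℂ | 0 < z.im}) (B : ℝ) (hB : ‖g z₀‖ ≤ B) :
    ∀ z ∈ Metric.ball z₀ (z₀.im / 2), ‖g z‖ ≤ 2 + 3 * B := by
  intro z hz
  have hin : ∀ ζ ∈ Metric.ball (0 : ℂ) z₀.im, 0 < (z₀ + ζ).im := by
    intro ζ hζ
    rw [mem_ball_zero_iff] at hζ
    have := Complex.abs_im_le_norm ζ
    have := neg_le_abs ζ.im
    simp only [Complex.add_im]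
    linarith
  have hzn : ‖z - z₀‖ < z₀.im / 2 := by rwa [Metric.mem_ball, dist_eq_norm] at hz
  have h := Complex.borelCaratheodory (f := fun ζ => Complex.I * g (z₀ + ζ)) (M := 1)
    (R := z₀.im) (z := z - z₀) one_pos ?_ ?_ hz₀ (by rw [mem_ball_zero_iff]; linarith)
  · simp only [norm_mul, Complex.norm_I, one_mul, add_sub_cancel, add_zero, mul_one] at h
    refine h.trans ?_
    have hR : 0 < z₀.im - ‖z - z₀‖ := by linarith
    have hn := norm_nonneg (z - z₀)
    have hB0 := (norm_nonneg _).trans hB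
    gcongr ?_ + ?_
    · rw [div_le_iff₀ hR]; linarith
    · rw [div_le_iff₀ hR]
      calc ‖g z₀‖ * (z₀.im + ‖z - z₀‖) ≤ B * (z₀.im + ‖z - z₀‖) := by gcongr
        _ ≤ B * (3 * (z₀.im - ‖z - z₀‖)) := by gcongr; linarith
        _ = _ := by ring
  · apply DifferentiableOn.const_mul
    exact hd.comp (by fun_prop) (fun ζ hζ => hin ζ hζ)
  · intro ζ hζ
    have := hm (hin ζ hζ)
    simp only [mem_ofPred_eq] at this ⊢
    simp [Complex.mul_re]
    linarith

/-- Joint convergence of difference quotients for a bounded family of holomorphic maps. -/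
lemma dslope_joint_tendsto {ι : Type*} (l : Filter ι) (g : ι → ℂ → ℂ) (G : ℂ → ℂ) (z₀ : ℂ) (r B : ℝ)
    (hr : 0 < r)
    (hd : ∀ᶠ i in l, DifferentiableOn ℂ (g i) (Metric.ball z₀ r))
    (hb : ∀ᶠ i in l, ∀ z ∈ Metric.ball z₀ r, ‖g i z‖ ≤ B)
    (hGd : DifferentiableOn ℂ G (Metric.ball z₀ r))
    (hGb : ∀ z ∈ Metric.ball z₀ r, ‖G z‖ ≤ B)
    (hlim : ∀ z ∈ Metric.ball z₀ r, Filter.Tendsto (fun i => g i z) l (nhds (G z)))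
    (w : ι → ℂ) (hw : Filter.Tendsto w l (nhds z₀)) :
    Filter.Tendsto (fun i => dslope (g i) z₀ (w i)) l (nhds (deriv G z₀)) := by
  have hB : 0 ≤ B := (norm_nonneg _).trans (hGb z₀ (Metric.mem_ball_self hr))
  obtain ⟨C, hC⟩ : ∃ C, C = (2 * (2 * B / r)) / r := ⟨_, rfl⟩
  have hC0 : 0 ≤ C := by rw [hC]; positivity
  have key : ∀ h : ℂ → ℂ, DifferentiableOn ℂ h (Metric.ball z₀ r) →
      (∀ z ∈ Metric.ball z₀ r, ‖h z‖ ≤ B) → ∀ z ∈ Metric.ball z₀ r,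
      dist (dslope h z₀ z) (dslope h z₀ z₀) ≤ C * dist z z₀ := by
    intro h hh hhb z hz
    have hz0 := Metric.mem_ball_self (x := z₀) hr
    have h1 : ∀ z ∈ Metric.ball z₀ r, ‖dslope h z₀ z‖ ≤ 2 * B / r := fun z hz =>
      Complex.norm_dslope_le_div_of_mapsTo_ball hh (fun z hz => by
        rw [Metric.mem_closedBall, dist_eq_norm]
        have := norm_sub_le (h z) (h z₀)
        linarith [hhb z hz, hhb z₀ hz0]) hz
    have hdd : DifferentiableOn ℂ (dslope h z₀) (Metric.ball z₀ r) :=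
      (Complex.differentiableOn_dslope (Metric.isOpen_ball.mem_nhds hz0)).mpr hh
    rw [hC]
    apply Complex.dist_le_div_mul_dist_of_mapsTo_ball hdd _ hz
    intro z hz
    rw [Metric.mem_closedBall, dist_eq_norm]
    have := norm_sub_le (dslope h z₀ z) (dslope h z₀ z₀)
    linarith [h1 z hz, h1 z₀ hz0]
  rw [Metric.tendsto_nhds]
  intro ε hε
  -- choose an auxiliary point
  obtain ⟨δ, hδ0, hδr, hδ⟩ : ∃ δ : ℝ, 0 < δ ∧ δ < r ∧ C * δ < ε / 4 := by
    refine ⟨min (r / 2) (ε / (8 * (C + 1))), by positivity, ?_, ?_⟩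
    · exact (min_le_left _ _).trans_lt (by linarith)
    · calc C * min (r / 2) (ε / (8 * (C + 1))) ≤ C * (ε / (8 * (C + 1))) := by
            gcongr; exact min_le_right _ _
        _ = ε / 8 * (C / (C + 1)) := by field_simp
        _ ≤ ε / 8 * 1 := by gcongr; rw [div_le_one (by positivity)]; linarith
        _ < ε / 4 := by linarith
  have hz1d : dist (z₀ + (δ : ℂ)) z₀ = δ := by
    simp [dist_eq_norm, abs_of_pos hδ0]
  have hz1 : z₀ + (δ : ℂ) ∈ Metric.ball z₀ r := by rw [Metric.mem_ball, hz1d]; exact hδr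
  have hne : z₀ + (δ : ℂ) ≠ z₀ := by simp [hδ0.ne']
  have hlim1 : Filter.Tendsto (fun i => dslope (g i) z₀ (z₀ + δ)) l
      (nhds (dslope G z₀ (z₀ + δ))) := by
    simp only [dslope_of_ne _ hne, slope_def_field]
    exact ((hlim _ hz1).sub (hlim _ (Metric.mem_ball_self hr))).div_const _
  have e1 := Metric.tendsto_nhds.1 hlim1 (ε / 4) (by positivity)
  have e2 := Metric.tendsto_nhds.1 hw δ hδ0
  filter_upwards [hd, hb, e1, e2] with i h1 h2 h3 h4
  have k1 := key (g i) h1 h2 (w i) (by rw [Metric.mem_ball]; linarith)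
  have k2 := key (g i) h1 h2 _ hz1
  have k3 := key G hGd hGb _ hz1
  rw [hz1d] at k2 k3
  rw [← dslope_same G z₀]
  have k4 : C * dist (w i) z₀ ≤ C * δ := by gcongr
  have t1 := dist_triangle (dslope (g i) z₀ (w i)) (dslope (g i) z₀ z₀) (dslope G z₀ z₀)
  have t2 := dist_triangle (dslope (g i) z₀ z₀) (dslope (g i) z₀ (z₀ + δ)) (dslope G z₀ z₀)
  have t3 := dist_triangle (dslope (g i) z₀ (z₀ + δ)) (dslope G z₀ (z₀ + δ)) (dslope G z₀ z₀)
  rw [dist_comm] at k2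
  linarith

/-- Trajectories of the backward flow exist. -/
lemma backward_flow_exists (t ε : ℝ) (ht : 0 ≤ t) (hε : 0 < ε) (η : ℝ → ℝ)
    (hη : ContinuousOn η (Icc 0 t)) (z₀ : ℂ) (hz₀ : z₀.im = ε) :
    ∃ w : ℝ → ℂ, w 0 = z₀ ∧ (∀ s ∈ Icc 0 t, ε ≤ (w s).im) ∧
      ∀ s ∈ Icc 0 t, HasDerivWithinAt w (-(2 / (w s - (η s : ℂ)))) (Icc 0 t) s := by
  let P : ℂ → ℂ := fun z => ⟨z.re, max z.im ε⟩
  have hPim : ∀ z, ε ≤ (P z).im := fun z => le_max_right _ _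
  have hPn : ∀ z (a : ℝ), ε ≤ ‖P z - a‖ := fun z a => by
    have h1 := Complex.abs_im_le_norm (P z - a)
    have h2 := le_abs_self (P z - a).im
    have h3 := hPim z
    simp only [Complex.sub_im, Complex.ofReal_im, sub_zero] at h1 h2
    linarith
  have hPne : ∀ z (a : ℝ), P z - a ≠ 0 := fun z a h => by
    have := hPn z a
    rw [h, norm_zero] at this
    linarith
  have hPlip : ∀ z z', ‖P z - P z'‖ ≤ 2 * ‖z - z'‖ := by
    intro z z'
    have h1 := Complex.norm_le_abs_re_add_abs_im (P z - P z')
    have h2 := Complex.abs_re_le_norm (z - z')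
    have h3 := Complex.abs_im_le_norm (z - z')
    have h4 := abs_max_sub_max_le_abs z.im z'.im ε
    simp only [P, Complex.sub_re, Complex.sub_im] at *
    linarith
  let v : ℝ → ℂ → ℂ := fun s z => -(2 / (P z - (η s : ℂ)))
  have hpl : IsPicardLindelof v (⟨0, left_mem_Icc.2 ht⟩ : Icc 0 t) z₀
      (⟨2 / ε * t, by positivity⟩) 0 (⟨2 / ε, by positivity⟩) (⟨4 / ε ^ 2, by positivity⟩) := by
    refine ⟨?_, ?_, ?_, ?_⟩
    · intro s hs
      apply LipschitzOnWith.of_dist_le_mul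
      intro z _ z' _
      rw [dist_eq_norm, dist_eq_norm]
      have e : v s z - v s z' = 2 * (P z - P z') / ((P z - η s) * (P z' - η s)) := by
        have h1 := hPne z (η s)
        have h2 := hPne z' (η s)
        simp only [v]
        field_simp
        ring
      rw [e, norm_div, norm_mul, norm_mul]
      have h1 := hPn z (η s)
      have h2 := hPn z' (η s)
      change _ ≤ 4 / ε ^ 2 * _
      calc _ ≤ ‖(2 : ℂ)‖ * (2 * ‖z - z'‖) / (ε * ε) := by
            gcongr
            exact hPlip z z'
        _ = _ := by simp; ring
    · intro z _
      have : ContinuousOn (fun s => ((η s : ℝ) : ℂ)) (Icc 0 t) :=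
        Complex.continuous_ofReal.comp_continuousOn hη
      exact ((continuousOn_const.div (continuousOn_const.sub this) (fun s _ => hPne z (η s)))).neg
    · intro s _ z _
      simp only [v, norm_neg, norm_div]
      change _ ≤ 2 / ε
      have := hPn z (η s)
      simp only [Complex.norm_ofNat]
      gcongr
    · change 2 / ε * max (t - 0) (0 - 0) ≤ 2 / ε * t - 0
      simp [ht]
  obtain ⟨w, hw0, hw⟩ := hpl.exists_eq_forall_mem_Icc_hasDerivWithinAt₀
  have hw0' : w 0 = z₀ := hw0
  have him : ∀ s ∈ Icc 0 t, HasDerivWithinAt (fun s => (w s).im) (v s (w s)).im (Icc 0 t) s :=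
    fun s hs => (Complex.imCLM.hasFDerivAt.comp_hasDerivWithinAt s (hw s hs))
  have hmono : MonotoneOn (fun s => (w s).im) (Icc 0 t) := by
    apply monotoneOn_of_hasDerivWithinAt_nonneg (convex_Icc 0 t)
      (fun s hs => (him s hs).continuousWithinAt) (f' := fun s => (v s (w s)).im)
    · intro s hs
      exact (him s (interior_subset hs)).mono interior_subset
    · intro s hs
      have h := hPim (w s)
      simp only [v, Complex.neg_im, Complex.div_im]
      have : 0 ≤ (P (w s)).im := by linarith
      have hn := Complex.normSq_nonneg (P (w s) - (η s : ℂ))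
      have : 0 ≤ 2 * (P (w s)).im / Complex.normSq (P (w s) - (η s : ℂ)) := by positivity
      simpa using this
  have hge : ∀ s ∈ Icc 0 t, ε ≤ (w s).im := by
    intro s hs
    have := hmono (left_mem_Icc.2 ht) hs hs.1
    simp only [hw0', hz₀] at this
    exact this
  refine ⟨w, hw0', hge, fun s hs => ?_⟩
  have hP : P (w s) = w s := Complex.ext rfl (max_eq_left (hge s hs))
  have := hw s hs
  simp only [v, hP] at this
  exact this

/-- Derivative of a product whose second factor vanishes at the base point. -/
lemma hasDerivWithinAt_mul_vanishing (A w : ℝ → ℂ) (J : Set ℝ) (s : ℝ) (a w' : ℂ)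
    (hA : Filter.Tendsto A (nhdsWithin s J) (nhds a)) (hw : HasDerivWithinAt w w' J s) :
    HasDerivWithinAt (fun s' => A s' * (w s' - w s)) (a * w') J s := by
  rw [hasDerivWithinAt_iff_tendsto_slope] at hw ⊢
  have h := (hA.mono_left (nhdsWithin_mono s (sdiff_subset (t := {s})))).mul hw
  refine h.congr (fun s' => ?_)
  simp only [slope_def_module, sub_self, mul_zero, sub_zero]
  rw [mul_smul_comm]

/-- The Loewner chain is constant along the backward flow. -/
lemma chain_const_along_flow (dr : ℝ → ℝ) (f : ℝ → ℂ → ℂ)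
    (hf_holo : ∀ u ∈ Icc (0 : ℝ) 1, DifferentiableOn ℂ (f u) {z : ℂ | 0 < z.im})
    (hf_maps : ∀ u ∈ Icc (0 : ℝ) 1, MapsTo (f u) {z : ℂ | 0 < z.im} {z : ℂ | 0 < z.im})
    (hf_zero : ∀ z : ℂ, 0 < z.im → f 0 z = z)
    (hf_ode : ∀ z : ℂ, 0 < z.im → ∀ u ∈ Icc (0 : ℝ) 1,
      HasDerivWithinAt (fun s => f s z)
        (-(2 / (z - (dr u : ℂ))) * deriv (f u) z) (Icc (0 : ℝ) 1) u)
    (t : ℝ) (ht : t ∈ Icc (0 : ℝ) 1) (w : ℝ → ℂ) (hwim : ∀ s ∈ Icc 0 t, 0 < (w s).im)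
    (hw : ∀ s ∈ Icc 0 t, HasDerivWithinAt w (-(2 / (w s - (dr (t - s) : ℂ)))) (Icc 0 t) s) :
    w t = f t (w 0) := by
  have hmap : MapsTo (fun s => t - s) (Icc 0 t) (Icc (0 : ℝ) 1) := fun s hs =>
    ⟨by linarith [hs.2], by linarith [hs.1, ht.2]⟩
  have hder : ∀ s ∈ Icc 0 t, HasDerivWithinAt (fun s' => f (t - s') (w s')) 0 (Icc 0 t) s := by
    intro s hs
    have hsub : HasDerivWithinAt (fun s' : ℝ => t - s') (-1) (Icc 0 t) s := by
      simpa using (hasDerivWithinAt_id s (Icc 0 t)).const_sub t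
    have hz := hwim s hs
    have h1 : HasDerivWithinAt (fun s' => f (t - s') (w s)) _ (Icc 0 t) s :=
      (hf_ode (w s) hz (t - s) (hmap hs)).scomp s hsub hmap
    -- local bound
    have hcont : ContinuousOn (fun u => f u (w s)) (Icc (0 : ℝ) 1) := fun u hu =>
      (hf_ode (w s) hz u hu).continuousWithinAt
    obtain ⟨B, hB⟩ := isCompact_Icc.exists_bound_of_continuousOn hcont
    have hr : 0 < (w s).im / 2 := by linarith
    have hballsub : Metric.ball (w s) ((w s).im / 2) ⊆ {z : ℂ | 0 < z.im} := by
      intro z hz'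
      rw [Metric.mem_ball, dist_eq_norm] at hz'
      have h1 := Complex.abs_im_le_norm (z - w s)
      have h2 := neg_le_abs (z - w s).im
      simp only [Complex.sub_im] at h1 h2
      simp only [mem_ofPred_eq]
      linarith
    have hself : ∀ᶠ s' in nhdsWithin s (Icc 0 t), s' ∈ Icc 0 t := self_mem_nhdsWithin
    have hA := dslope_joint_tendsto (nhdsWithin s (Icc 0 t)) (fun s' => f (t - s')) (f (t - s))
      (w s) ((w s).im / 2) (2 + 3 * B) hr
      (hself.mono fun s' hs' => (hf_holo _ (hmap hs')).mono hballsub)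
      (hself.mono fun s' hs' => half_plane_local_bound _ _ hz (hf_holo _ (hmap hs'))
        (hf_maps _ (hmap hs')) B (hB _ (hmap hs')))
      ((hf_holo _ (hmap hs)).mono hballsub)
      (half_plane_local_bound _ _ hz (hf_holo _ (hmap hs))
        (hf_maps _ (hmap hs)) B (hB _ (hmap hs)))
      (fun z hz' => by
        have hc := (hf_ode z (hballsub hz') (t - s) (hmap hs)).continuousWithinAt
        exact hc.tendsto.comp (hsub.continuousWithinAt.tendsto_nhdsWithin hmap))
      w (hw s hs).continuousWithinAt
    have h2 := hasDerivWithinAt_mul_vanishing _ w (Icc 0 t) s _ _ hA (hw s hs)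
    have h3 := h1.add h2
    have e : (fun s' => f (t - s') (w s')) = (fun s' => f (t - s') (w s)) +
        (fun s' => dslope (f (t - s')) (w s) (w s') * (w s' - w s)) := by
      funext s'
      have := sub_smul_dslope (f (t - s')) (w s) (w s')
      rw [smul_eq_mul] at this
      simp only [Pi.add_apply]
      rw [mul_comm, this]
      ring
    rw [e]
    refine h3.congr_deriv ?_
    simp
    ring
  have hcs := constant_of_has_deriv_right_zero (a := 0) (b := t)
    (f := fun s' => f (t - s') (w s')) (fun s hs => (hder s hs).continuousWithinAt)
    (fun s hs => (hder s ⟨hs.1, hs.2.le⟩).mono_of_mem_nhdsWithin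
      (Filter.mem_of_superset (Icc_mem_nhdsGE hs.2) (Icc_subset_Icc_left hs.1)))
    t (right_mem_Icc.2 ht.1)
  simp only [sub_self, sub_zero] at hcs
  rw [hf_zero _ (hwim t (right_mem_Icc.2 ht.1))] at hcs
  exact hcs


/-- Extraction of the last excursion window. -/
lemma excursion_window (σ t : ℝ) (x y ξ : ℝ → ℝ)
    (hx : ∀ s ∈ Icc 0 t, HasDerivWithinAt x
      (-(2 * (x s - ξ s) / ((x s - ξ s) ^ 2 + y s ^ 2))) (Icc 0 t) s)
    (hy : ∀ s ∈ Icc 0 t, HasDerivWithinAt y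
      (2 * y s / ((x s - ξ s) ^ 2 + y s ^ 2)) (Icc 0 t) s)
    (hξ : ContinuousOn ξ (Icc 0 t)) (h0 : x 0 = ξ 0)
    (hlip : ∀ s ∈ Icc 0 t, ∀ s' ∈ Icc 0 t, |ξ s - ξ s'| ≤ σ * √|s - s'|)
    (s₁ : ℝ) (hs₁ : s₁ ∈ Icc 0 t) (hne : x s₁ - ξ s₁ ≠ 0) :
    ∃ α, 0 ≤ α ∧ α < s₁ ∧ ∃ X u : ℝ → ℝ, (∀ s, |u s| = |x s - ξ s|) ∧
      (∀ s ∈ Icc α s₁, HasDerivWithinAt X (2 * u s / (u s ^ 2 + y s ^ 2)) (Icc α s₁) s) ∧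
      (∀ s ∈ Icc α s₁, HasDerivWithinAt y (2 * y s / (u s ^ 2 + y s ^ 2)) (Icc α s₁) s) ∧
      (∀ s ∈ Icc α s₁, 0 ≤ u s) ∧ X α = 0 ∧
      (∀ s ∈ Icc α s₁, X s + u s ≤ σ * √(s - α)) := by
  have hcx : ContinuousOn x (Icc 0 t) := fun s hs => (hx s hs).continuousWithinAt
  obtain ⟨e, he2, heu⟩ : ∃ e : ℝ, e ^ 2 = 1 ∧ 0 < e * (x s₁ - ξ s₁) := by
    rcases lt_or_gt_of_ne hne with h | h
    · exact ⟨-1, by norm_num, by linarith⟩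
    · exact ⟨1, by norm_num, by linarith⟩
  have hsub1 : Icc 0 s₁ ⊆ Icc 0 t := Icc_subset_Icc_right hs₁.2
  have hcu : ContinuousOn (fun s => e * (x s - ξ s)) (Icc 0 s₁) :=
    continuousOn_const.mul ((hcx.mono hsub1).sub (hξ.mono hsub1))
  let K : Set ℝ := {s ∈ Icc 0 s₁ | e * (x s - ξ s) ≤ 0}
  have hKcl : IsCompact K := by
    apply isCompact_Icc.of_isClosed_subset _ (fun s hs => hs.1)
    exact isClosed_Icc.isClosed_le hcu continuousOn_const
  have hKne : K.Nonempty := ⟨0, left_mem_Icc.2 hs₁.1, by rw [h0]; simp⟩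
  obtain ⟨α, hαK, hαmax⟩ := hKcl.exists_isGreatest hKne
  have hα1 : α < s₁ := lt_of_le_of_ne hαK.1.2 (fun h => by
    have := hαK.2; rw [h] at this; linarith)
  have hpos : ∀ s ∈ Ioc α s₁, 0 < e * (x s - ξ s) := by
    intro s hs
    by_contra h
    push Not at h
    have := hαmax (show s ∈ K from ⟨⟨hαK.1.1.trans hs.1.le, hs.2⟩, h⟩)
    linarith [hs.1]
  have hsub2 : Icc α s₁ ⊆ Icc 0 s₁ := Icc_subset_Icc_left hαK.1.1
  have hsub : Icc α s₁ ⊆ Icc 0 t := hsub2.trans hsub1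
  have hnn : ∀ s ∈ Icc α s₁, 0 ≤ e * (x s - ξ s) := by
    intro s hs
    have hcl : s ∈ closure (Ioc α s₁) := by rw [closure_Ioc hα1.ne]; exact hs
    refine ContinuousWithinAt.closure_le hcl continuousWithinAt_const
      ((hcu s (hsub2 hs)).mono (Ioc_subset_Icc_self.trans hsub2)) (fun s hs => (hpos s hs).le)
  have hαI : α ∈ Icc α s₁ := left_mem_Icc.2 hα1.le
  have hα0 : x α = ξ α := by
    have h1 := le_antisymm hαK.2 (hnn α hαI)
    have : e ≠ 0 := fun h => by rw [h] at he2; norm_num at he2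
    rcases mul_eq_zero.1 h1 with h | h
    · exact absurd h this
    · linarith
  have heabs : |e| = 1 := by
    rw [← sq_eq_sq₀ (abs_nonneg e) zero_le_one, sq_abs, he2]; norm_num
  have hsq : ∀ s, (e * (x s - ξ s)) ^ 2 = (x s - ξ s) ^ 2 := fun s => by
    rw [mul_pow, he2, one_mul]
  refine ⟨α, hαK.1.1, hα1, fun s => e * (x α - x s), fun s => e * (x s - ξ s), ?_, ?_, ?_, hnn,
    by simp, ?_⟩
  · intro s
    rw [abs_mul, heabs, one_mul]
  · intro s hs
    have h := (((hx s (hsub hs)).mono hsub).const_sub (x α)).const_mul e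
    simp only [hsq]
    refine h.congr_deriv ?_
    ring
  · intro s hs
    rw [hsq]
    exact (hy s (hsub hs)).mono hsub
  · intro s hs
    have h1 := hlip α (hsub hαI) s (hsub hs)
    rw [abs_sub_comm α s, abs_of_nonneg (sub_nonneg.2 hs.1)] at h1
    have e1 : e * (x α - x s) + e * (x s - ξ s) = e * (ξ α - ξ s) := by rw [hα0]; ring
    rw [e1]
    refine le_trans (le_abs_self _) ?_
    rw [abs_mul, heabs, one_mul]
    exact h1

set_option maxHeartbeats 2000000 in
/-- Slope bound along a backward trajectory. -/
lemma trajectory_bound (σ t : ℝ) (hσ : 0 < σ) (hσ4 : σ < 4) (ht : 0 ≤ t) (x y ξ : ℝ → ℝ)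
    (hx : ∀ s ∈ Icc 0 t, HasDerivWithinAt x
      (-(2 * (x s - ξ s) / ((x s - ξ s) ^ 2 + y s ^ 2))) (Icc 0 t) s)
    (hy : ∀ s ∈ Icc 0 t, HasDerivWithinAt y
      (2 * y s / ((x s - ξ s) ^ 2 + y s ^ 2)) (Icc 0 t) s)
    (hypos : ∀ s ∈ Icc 0 t, 0 < y s)
    (hξ : ContinuousOn ξ (Icc 0 t)) (h0 : x 0 = ξ 0)
    (hlip : ∀ s ∈ Icc 0 t, ∀ s' ∈ Icc 0 t, |ξ s - ξ s'| ≤ σ * √|s - s'|)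
    (p : ℝ) (hp_mem : p ∈ Ioi (σ / (4 - σ)))
    (hp_eq : Real.exp p =
      Real.sqrt (16 - σ ^ 2) / Real.sqrt (16 * p ^ 2 - σ ^ 2 * (p + 1) ^ 2))
    (L : ℝ) (hL : L = σ * (1 + p) * Real.exp p / Real.sqrt (16 - σ ^ 2)) :
    |x t - ξ t| ≤ L * y t := by
  have hp : σ / (4 - σ) < p := hp_mem
  have h4 : 0 < 4 - σ := by linarith
  have hp0 : 0 < p := lt_trans (by positivity) hp
  have hD : 0 < 16 - σ ^ 2 := by nlinarith
  have hDs : 0 < √(16 - σ ^ 2) := sqrt_pos.2 hD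
  have hL0 : 0 < L := by rw [hL]; positivity
  have hE : 0 < 16 * p ^ 2 - σ ^ 2 * (p + 1) ^ 2 := by
    have hp' := hp
    rw [div_lt_iff₀ h4] at hp'
    have h1 : 0 < 4 * p - σ * (p + 1) := by linarith
    have h2 : 0 < 4 * p + σ * (p + 1) := by positivity
    have h3 := mul_pos h1 h2
    linarith
  have hEs : 0 < √(16 * p ^ 2 - σ ^ 2 * (p + 1) ^ 2) := sqrt_pos.2 hE
  have htI : t ∈ Icc 0 t := right_mem_Icc.2 ht
  have hcx : ContinuousOn x (Icc 0 t) := fun s hs => (hx s hs).continuousWithinAt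
  have hcy : ContinuousOn y (Icc 0 t) := fun s hs => (hy s hs).continuousWithinAt
  rcases lt_or_ge p 1 with hp1 | hp1
  · -- small parameter: maximise the slope
    have hcm : ContinuousOn (fun s => |x s - ξ s| / y s) (Icc 0 t) :=
      (hcx.sub hξ).abs.div hcy (fun s hs => (hypos s hs).ne')
    obtain ⟨s₁, hs₁, hmax⟩ := isCompact_Icc.exists_isMaxOn ⟨t, htI⟩ hcm
    set M := |x s₁ - ξ s₁| / y s₁ with hM
    have hM0 : 0 ≤ M := div_nonneg (abs_nonneg _) (hypos s₁ hs₁).le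
    have hall : ∀ s ∈ Icc 0 t, |x s - ξ s| ≤ M * y s := fun s hs => by
      rw [← div_le_iff₀ (hypos s hs)]; exact hmax hs
    suffices hML : M ≤ L by
      refine (hall t htI).trans ?_
      have := hypos t htI
      gcongr
    by_cases hz : x s₁ - ξ s₁ = 0
    · rw [hM, hz]; simpa using hL0.le
    obtain ⟨α, hα0, hα1, X, u, huabs, hX, hy', hu, hXα, hc⟩ :=
      excursion_window σ t x y ξ hx hy hξ h0 hlip s₁ hs₁ hz
    have hsub : Icc α s₁ ⊆ Icc 0 t := Icc_subset_Icc hα0 hs₁.2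
    have hαI : α ∈ Icc α s₁ := left_mem_Icc.2 hα1.le
    have hsI : s₁ ∈ Icc α s₁ := right_mem_Icc.2 hα1.le
    have htime := window_time M α s₁ hα1.le y u hy' (fun s hs => hypos s (hsub hs))
      (fun s hs => by rw [huabs]; exact hall s (hsub hs))
    have hXn : 0 ≤ X s₁ := by
      rw [← hXα]
      exact window_mono α s₁ X _ hX (fun s hs => by have := hu s hs; positivity) hαI hsI hα1.le
    have hus : u s₁ = M * y s₁ := by
      rw [← abs_of_nonneg (hu s₁ hsI), huabs, hM]
      have := (hypos s₁ hs₁).ne'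
      field_simp
    have hys := hypos s₁ hs₁
    have h1 : M * y s₁ ≤ σ * √(s₁ - α) := by
      rw [← hus]; linarith [hc s₁ hsI]
    have h2 : (M * y s₁) ^ 2 ≤ σ ^ 2 * (s₁ - α) := by
      calc (M * y s₁) ^ 2 ≤ (σ * √(s₁ - α)) ^ 2 := by gcongr
        _ = _ := by rw [mul_pow, sq_sqrt (sub_nonneg.2 hα1.le)]
    have h3 : 4 * M ^ 2 ≤ σ ^ 2 * (1 + M ^ 2) := by
      have : 4 * M ^ 2 * y s₁ ^ 2 ≤ σ ^ 2 * (1 + M ^ 2) * y s₁ ^ 2 := by nlinarith [sq_nonneg σ]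
      exact le_of_mul_le_mul_right this (by positivity)
    have hLeq : L = σ * (1 + p) / √(16 * p ^ 2 - σ ^ 2 * (p + 1) ^ 2) := by
      rw [hL, hp_eq]; field_simp
    have hL2 : L ^ 2 * (16 * p ^ 2 - σ ^ 2 * (p + 1) ^ 2) = σ ^ 2 * (1 + p) ^ 2 := by
      rw [hLeq, div_pow, sq_sqrt hE.le, div_mul_cancel₀ _ hE.ne']; ring
    have h5 : σ ^ 2 * (1 + L ^ 2) ≤ 4 * L ^ 2 := by
      have h6 : σ ^ 2 * (1 + L ^ 2) * (1 + p) ^ 2 = 16 * p ^ 2 * L ^ 2 := by linarith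
      have h7 : 16 * p ^ 2 * L ^ 2 ≤ 4 * L ^ 2 * (1 + p) ^ 2 := by
        have : 4 * p ^ 2 ≤ (1 + p) ^ 2 := by nlinarith
        nlinarith [sq_nonneg L]
      exact le_of_mul_le_mul_right (h6.trans_le h7) (by positivity)
    have hσ2 : σ ^ 2 < 4 := by
      by_contra h
      push Not at h
      nlinarith [sq_nonneg L]
    have h8 : (4 - σ ^ 2) * M ^ 2 ≤ (4 - σ ^ 2) * L ^ 2 := by linarith
    have h9 : M ^ 2 ≤ L ^ 2 := le_of_mul_le_mul_left h8 (by linarith)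
    exact le_of_sq_le_sq h9 hL0.le
  · by_cases hz : x t - ξ t = 0
    · rw [hz, abs_zero]; exact mul_nonneg hL0.le (hypos t htI).le
    have hyt := hypos t htI
    obtain ⟨α, hα0, hα1, X, u, huabs, hX, hy', hu, hXα, hc⟩ :=
      excursion_window σ t x y ξ hx hy hξ h0 hlip t htI hz
    have hsub : Icc α t ⊆ Icc 0 t := Icc_subset_Icc_left hα0
    have htI' : t ∈ Icc α t := right_mem_Icc.2 hα1.le
    rw [← huabs, abs_of_nonneg (hu t htI')]
    rcases le_or_gt 8 (σ ^ 2) with h8 | h8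
    · obtain ⟨a, ha0, haσ, hb⟩ := window_barrier σ hσ hσ4 h8 α t hα1 X y u hX hy'
        (fun s hs => hypos s (hsub hs)) hu hXα hc
      refine hb.trans ?_
      gcongr
      have hexp : 2 * σ / (16 - σ ^ 2) * min a (σ / 2) ≤ p := by
        have h1 : 2 * σ / (16 - σ ^ 2) * min a (σ / 2) ≤ 2 * σ / (16 - σ ^ 2) * (σ / 2) := by
          gcongr; exact min_le_right _ _
        have h2 : 2 * σ / (16 - σ ^ 2) * (σ / 2) ≤ σ / (4 - σ) := by
          have e : 2 * σ / (16 - σ ^ 2) * (σ / 2) = σ ^ 2 / (16 - σ ^ 2) := by ring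
          rw [e, div_le_div_iff₀ hD h4]
          nlinarith [mul_pos hσ h4]
        linarith
      calc 2 / √(16 - σ ^ 2) * Real.exp (2 * σ / (16 - σ ^ 2) * min a (σ / 2)) * (σ - a)
          ≤ 2 / √(16 - σ ^ 2) * Real.exp p * σ := by
            gcongr
            · linarith
        _ ≤ (1 + p) / √(16 - σ ^ 2) * Real.exp p * σ := by
            gcongr; linarith
        _ = L := by rw [hL]; ring
    · -- intermediate range: use the barrier for √8
      have h88 : √8 ^ 2 = (8 : ℝ) := sq_sqrt (by norm_num)
      have h8pos : 0 < √(8 : ℝ) := sqrt_pos.2 (by norm_num)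
      have hσ8 : σ ≤ √8 := Real.le_sqrt_of_sq_le h8.le
      have h84 : √(8 : ℝ) < 4 := by nlinarith
      obtain ⟨a, ha0, haσ, hb⟩ := window_barrier (√8) h8pos h84 h88.ge α t hα1 X y u hX hy'
        (fun s hs => hypos s (hsub hs)) hu hXα (fun s hs => (hc s hs).trans (by gcongr))
      refine hb.trans ?_
      gcongr
      rw [h88]
      have he : 2 / √(16 - 8 : ℝ) * Real.exp (2 * √8 / (16 - 8) * min a (√8 / 2)) * (√8 - a)
          ≤ Real.exp 1 := by
        have e1 : (16 - 8 : ℝ) = 8 := by norm_num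
        rw [e1]
        have h1 : 2 * √8 / 8 * min a (√8 / 2) ≤ 2 * √8 / 8 * a := by
          gcongr; exact min_le_left _ _
        calc 2 / √8 * Real.exp (2 * √8 / 8 * min a (√8 / 2)) * (√8 - a)
            ≤ 2 / √8 * Real.exp (2 * √8 / 8 * a) * (√8 - a) := by
              gcongr
          _ = Real.exp (2 * √8 / 8 * a) * ((1 - 2 * √8 / 8 * a) + 1) := by
              have : (2 : ℝ) / √8 = 2 * √8 / 8 := by
                rw [div_eq_div_iff h8pos.ne' (by norm_num)]; nlinarith
              rw [this]
              have : 2 * √8 / 8 * √8 = (2 : ℝ) := by nlinarith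
              linear_combination Real.exp (2 * √8 / 8 * a) * this
          _ ≤ Real.exp (2 * √8 / 8 * a) * Real.exp (1 - 2 * √8 / 8 * a) := by
              gcongr; exact Real.add_one_le_exp _
          _ = Real.exp 1 := by rw [← Real.exp_add]; congr 1; ring
      refine he.trans ?_
      -- lower bound for L
      have hexp2 : Real.exp p ^ 2 * (16 * p ^ 2 - σ ^ 2 * (p + 1) ^ 2) = 16 - σ ^ 2 := by
        rw [hp_eq, div_pow, sq_sqrt hD.le, sq_sqrt hE.le, div_mul_cancel₀ _ hE.ne']
      have he1 : (2.7 : ℝ) ≤ Real.exp p :=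
        le_trans (by linarith [Real.exp_one_gt_d9]) (Real.exp_le_exp.2 hp1)
      have he7 : (7.2 : ℝ) ≤ Real.exp p ^ 2 := by nlinarith
      have hEle : 7.2 * (16 * p ^ 2 - σ ^ 2 * (p + 1) ^ 2) ≤ 16 := by
        have := mul_le_mul_of_nonneg_right he7 hE.le
        nlinarith [sq_nonneg σ]
      have hσl : 3.2 ≤ σ ^ 2 := by
        by_contra h
        push Not at h
        nlinarith [mul_pos (sub_pos.2 h) (by positivity : 0 < (p + 1) ^ 2)]
      have hk : √(16 - σ ^ 2) ≤ 2 * σ := by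
        apply Real.sqrt_le_iff.2
        constructor
        · linarith
        · nlinarith
      calc Real.exp 1 ≤ Real.exp p := Real.exp_le_exp.2 hp1
        _ ≤ σ * (1 + p) * Real.exp p / √(16 - σ ^ 2) := by
            rw [le_div_iff₀ hDs]
            have : √(16 - σ ^ 2) ≤ σ * (1 + p) := by nlinarith
            nlinarith [Real.exp_pos p]
        _ = L := hL.symm


/-- Cone theorem for Loewner curves, full range `0 < σ < 4`: a curve driven by a Lip-1/2
function with seminorm at most `σ` stays in the cone `{|Re z| ≤ L_σ · Im z}`. -/
theorem loewner_curve_cone_bound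
    (σ : ℝ) (hσ0 : 0 < σ)
    (dr : ℝ → ℝ) (hdrcont : ContinuousOn dr (Icc 0 1)) (hdr0 : dr 0 = 0)
    (hdrlip : ∀ s ∈ Icc (0 : ℝ) 1, ∀ u ∈ Icc (0 : ℝ) 1,
      |dr u - dr s| ≤ σ * Real.sqrt |u - s|)
    (f : ℝ → ℂ → ℂ)
    (hf_inj : ∀ u ∈ Icc (0 : ℝ) 1, InjOn (f u) {z : ℂ | 0 < z.im})
    (hf_holo : ∀ u ∈ Icc (0 : ℝ) 1, DifferentiableOn ℂ (f u) {z : ℂ | 0 < z.im})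
    (hf_maps : ∀ u ∈ Icc (0 : ℝ) 1, MapsTo (f u) {z : ℂ | 0 < z.im} {z : ℂ | 0 < z.im})
    (hf_zero : ∀ z : ℂ, 0 < z.im → f 0 z = z)
    (hf_ode : ∀ z : ℂ, 0 < z.im → ∀ u ∈ Icc (0 : ℝ) 1,
      HasDerivWithinAt (fun s => f s z)
        (-(2 / (z - (dr u : ℂ))) * deriv (f u) z) (Icc (0 : ℝ) 1) u)
    (γ : ℝ → ℂ) (hγcont : ContinuousOn γ (Icc 0 1))
    (hγlim : ∀ u ∈ Icc (0 : ℝ) 1,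
      Filter.Tendsto (fun y : ℝ => f u ((dr u : ℂ) + y * Complex.I))
        (nhdsWithin 0 (Ioi (0 : ℝ))) (nhds (γ u)))
    (hσ4 : σ < 4)
    (p : ℝ) (hp_mem : p ∈ Ioi (σ / (4 - σ)))
    (hp_eq : Real.exp p =
      Real.sqrt (16 - σ ^ 2) / Real.sqrt (16 * p ^ 2 - σ ^ 2 * (p + 1) ^ 2))
    (L : ℝ) (hL : L = σ * (1 + p) * Real.exp p / Real.sqrt (16 - σ ^ 2)) :
    ∀ u ∈ Icc (0 : ℝ) 1, |(γ u).re| ≤ L * (γ u).im := by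
  intro t ht
  have hmap : ∀ s ∈ Icc 0 t, t - s ∈ Icc (0 : ℝ) 1 := fun s hs =>
    ⟨by linarith [hs.2], by linarith [hs.1, ht.2]⟩
  have hηc : ContinuousOn (fun s => dr (t - s)) (Icc 0 t) :=
    hdrcont.comp (by fun_prop) hmap
  have key : ∀ ε : ℝ, 0 < ε → |(f t ((dr t : ℂ) + ε * Complex.I)).re| ≤
      L * (f t ((dr t : ℂ) + ε * Complex.I)).im := by
    intro ε hε
    obtain ⟨w, hw0, hwim, hw⟩ := backward_flow_exists t ε ht.1 hε (fun s => dr (t - s)) hηc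
      ((dr t : ℂ) + ε * Complex.I) (by simp)
    have hwpos : ∀ s ∈ Icc 0 t, 0 < (w s).im := fun s hs => hε.trans_le (hwim s hs)
    have hend := chain_const_along_flow dr f hf_holo hf_maps hf_zero hf_ode t ht w hwpos hw
    have hb := trajectory_bound σ t hσ0 hσ4 ht.1 (fun s => (w s).re) (fun s => (w s).im)
      (fun s => dr (t - s))
      (fun s hs => by
        have h := Complex.reCLM.hasFDerivAt.comp_hasDerivWithinAt s (hw s hs)
        refine h.congr_deriv ?_
        simp [Complex.div_re, Complex.normSq_apply]
        ring)
      (fun s hs => by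
        have h := Complex.imCLM.hasFDerivAt.comp_hasDerivWithinAt s (hw s hs)
        refine h.congr_deriv ?_
        simp [Complex.div_im, Complex.normSq_apply]
        ring)
      hwpos hηc (by simp [hw0])
      (fun s hs s' hs' => by
        have h := hdrlip _ (hmap s' hs') _ (hmap s hs)
        have e : |t - s - (t - s')| = |s - s'| := by
          rw [abs_sub_comm s s']; congr 1; ring
        rwa [e] at h)
      p hp_mem hp_eq L hL
    simp only [sub_self, hdr0, sub_zero] at hb
    rw [hend, hw0] at hb
    exact hb
  have hlim := hγlim t ht
  refine le_of_tendsto_of_tendsto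
    ((Complex.continuous_re.tendsto _).comp hlim).abs
    (((Complex.continuous_im.tendsto _).comp hlim).const_mul L) ?_
  filter_upwards [self_mem_nhdsWithin] with ε hε
  exact key ε hε
end

section
/- Assume the Loewner chain setup with 0 < σ < 8/π. Then, for every t ∈ [0,1], |Re γ(t)| ≤ (πσ/√(64 − π²σ²))·Im γ(t). -/
open Set MeasureTheory intervalIntegral Real

lemma dslope_bd {φ : ℂ → ℂ} {c w : ℂ} {R : ℝ} (hR : 0 < R)
    (hd : DifferentiableOn ℂ φ (Metric.ball c R)) (hb : ∀ z ∈ Metric.ball c R, ‖φ z‖ ≤ 1)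
    (hw : w ∈ Metric.ball c R) :
    ‖dslope φ c w - deriv φ c‖ ≤ 4 / R ^ 2 * ‖w - c‖ := by
  have hc : c ∈ Metric.ball c R := Metric.mem_ball_self hR
  have hmaps : MapsTo φ (Metric.ball c R) (Metric.closedBall (φ c) 2) := by
    intro z hz
    rw [mem_closedBall_iff_norm]
    calc ‖φ z - φ c‖ ≤ ‖φ z‖ + ‖φ c‖ := norm_sub_le _ _
      _ ≤ 2 := by linarith [hb z hz, hb c hc]
  have hder := Complex.norm_deriv_le_div_of_mapsTo_ball hd hmaps hR
  by_cases hwc : w = c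
  · subst hwc; simp
  have hda : DifferentiableAt ℂ φ c := hd.differentiableAt (Metric.ball_mem_nhds c hR)
  let g : ℂ → ℂ := fun z => φ z - deriv φ c * (z - c)
  have hgd : DifferentiableOn ℂ g (Metric.ball c R) := by
    apply hd.sub; fun_prop
  have hgm : MapsTo g (Metric.ball c R) (Metric.closedBall (g c) 4) := by
    intro z hz
    rw [mem_closedBall_iff_norm]
    have h1 : g z - g c = (φ z - φ c) - deriv φ c * (z - c) := by simp [g]; ring
    rw [h1]
    have h2 := hmaps hz
    rw [mem_closedBall_iff_norm] at h2
    have h3 : ‖deriv φ c * (z - c)‖ ≤ 2 / R * R := by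
      rw [norm_mul]
      rw [mem_ball_iff_norm] at hz
      gcongr
    rw [div_mul_cancel₀ _ hR.ne'] at h3
    linarith [norm_sub_le (φ z - φ c) (deriv φ c * (z - c))]
  have hlo : (fun z => g z - g c) =o[nhds c] (fun z => ‖z - c‖ ^ 1) := by
    have := hda.hasDerivAt.isLittleO
    simp only [pow_one]
    rw [Asymptotics.isLittleO_norm_right]
    refine this.congr_left ?_
    intro z; simp [g]; ring
  have key := Complex.dist_le_mul_div_pow_of_mapsTo_ball_of_isLittleO hgd hgm hlo hw
  rw [dist_eq_norm, dist_eq_norm] at key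
  have hne : w - c ≠ 0 := sub_ne_zero.2 hwc
  have hpos : 0 < ‖w - c‖ := norm_pos_iff.2 hne
  have e : dslope φ c w - deriv φ c = (g w - g c) / (w - c) := by
    rw [dslope_of_ne _ hwc, slope_def_field]; simp [g]; field_simp; ring
  rw [e, norm_div, div_le_iff₀ hpos]
  calc _ ≤ _ := key
    _ = _ := by norm_num; field_simp

lemma deriv_cont {F : ℝ → ℂ → ℂ} {I : Set ℝ} {t0 : ℝ} {c : ℂ} {R : ℝ} (hR : 0 < R) (ht0 : t0 ∈ I)
    (hd : ∀ t ∈ I, DifferentiableOn ℂ (F t) (Metric.ball c R))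
    (hb : ∀ t ∈ I, ∀ z ∈ Metric.ball c R, ‖F t z‖ ≤ 1)
    (hc : ∀ z ∈ Metric.ball c R, ContinuousWithinAt (fun t => F t z) I t0) :
    ContinuousWithinAt (fun t => deriv (F t) c) I t0 := by
  rw [Metric.continuousWithinAt_iff']
  intro ε hε
  let δ : ℝ := min (R / 2) (ε * R ^ 2 / 16)
  have hδ : 0 < δ := by positivity
  have hδR : δ < R := lt_of_le_of_lt (min_le_left _ _) (by linarith)
  have hδε : 4 / R ^ 2 * δ ≤ ε / 4 := by
    have : δ ≤ ε * R ^ 2 / 16 := min_le_right _ _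
    calc 4 / R ^ 2 * δ ≤ 4 / R ^ 2 * (ε * R ^ 2 / 16) := by gcongr
      _ = ε / 4 := by field_simp; norm_num
  let w : ℂ := c + δ
  have hwn : ‖w - c‖ = δ := by simp [w, abs_of_pos hδ]
  have hw : w ∈ Metric.ball c R := by rw [mem_ball_iff_norm, hwn]; exact hδR
  have hwc : w ≠ c := by
    intro h; rw [h] at hwn; simp at hwn; linarith
  have hD : ContinuousWithinAt (fun t => dslope (F t) c w) I t0 := by
    simp only [dslope_of_ne _ hwc, slope_def_field]
    exact ((hc w hw).sub (hc c (Metric.mem_ball_self hR))).div_const _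
  rw [Metric.continuousWithinAt_iff'] at hD
  filter_upwards [hD (ε / 4) (by positivity), self_mem_nhdsWithin] with t ht htI
  rw [dist_eq_norm] at ht ⊢
  have h1 := dslope_bd hR (hd t htI) (hb t htI) hw
  have h2 := dslope_bd hR (hd t0 ht0) (hb t0 ht0) hw
  rw [hwn] at h1 h2
  have e : deriv (F t) c - deriv (F t0) c = (dslope (F t) c w - dslope (F t0) c w)
    - (dslope (F t) c w - deriv (F t) c) + (dslope (F t0) c w - deriv (F t0) c) := by ring
  rw [e]
  refine lt_of_le_of_lt (norm_add_le _ _) ?_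
  have := norm_sub_le (dslope (F t) c w - dslope (F t0) c w) (dslope (F t) c w - deriv (F t) c)
  linarith

lemma mul_deriv {a b : ℝ → ℂ} {b' : ℂ} {S : Set ℝ} {s : ℝ} (ha : ContinuousWithinAt a S s)
    (hb : HasDerivWithinAt b b' S s) (hb0 : b s = 0) :
    HasDerivWithinAt (fun r => a r * b r) (a s * b') S s := by
  rw [hasDerivWithinAt_iff_tendsto_slope] at hb ⊢
  have h1 : Filter.Tendsto a (nhdsWithin s (S \ {s})) (nhds (a s)) :=
    ha.tendsto.mono_left (nhdsWithin_mono _ sdiff_subset)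
  refine (h1.mul hb).congr ?_
  intro r
  simp [slope_def_module, hb0]
  ring

/-- chain rule -/
lemma chain {F : ℝ → ℂ → ℂ} {I S : Set ℝ} {T s : ℝ} {h : ℝ → ℂ} {h' Ft : ℂ} {R : ℝ}
    (hR : 0 < R) (hs : s ∈ S) (hST : MapsTo (fun r => T - r) S I)
    (hh : HasDerivWithinAt h h' S s)
    (hd : ∀ t ∈ I, DifferentiableOn ℂ (F t) (Metric.ball (h s) R))
    (hb : ∀ t ∈ I, ∀ z ∈ Metric.ball (h s) R, ‖F t z‖ ≤ 1)
    (hc : ∀ z ∈ Metric.ball (h s) R, ContinuousWithinAt (fun t => F t z) I (T - s))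
    (hF : HasDerivWithinAt (fun t => F t (h s)) Ft I (T - s)) :
    HasDerivWithinAt (fun r => F (T - r) (h r)) (-Ft + deriv (F (T - s)) (h s) * h') S s := by
  have h1 : HasDerivWithinAt (fun r : ℝ => T - r) (-1) S s := by
    simpa using ((hasDerivAt_id s).const_sub T).hasDerivWithinAt
  have h2 : HasDerivWithinAt (fun r => F (T - r) (h s)) (-Ft) S s := by
    have := HasDerivWithinAt.scomp s hF h1 hST
    simpa [Function.comp_def] using this
  let a : ℝ → ℂ := fun r => dslope (F (T - r)) (h s) (h r)
  have hcomp : ContinuousWithinAt (fun r => deriv (F (T - r)) (h s)) S s :=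
    ContinuousWithinAt.comp (f := fun r => T - r) (g := fun t => deriv (F t) (h s))
      (deriv_cont hR (hST hs) hd hb hc) h1.continuousWithinAt hST
  have has : a s = deriv (F (T - s)) (h s) := by simp [a]
  have ha : ContinuousWithinAt a S s := by
    have h3 : Filter.Tendsto (fun r => a r - deriv (F (T - r)) (h s)) (nhdsWithin s S) (nhds 0) := by
      have h4 : Filter.Tendsto (fun r => 4 / R ^ 2 * ‖h r - h s‖) (nhdsWithin s S) (nhds 0) := by
        have := ((hh.continuousWithinAt.sub_const (h s)).norm).const_mul (4 / R ^ 2)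
        simpa [ContinuousWithinAt] using this
      refine squeeze_zero_norm' ?_ h4
      have : ∀ᶠ r in nhdsWithin s S, h r ∈ Metric.ball (h s) R :=
        hh.continuousWithinAt (Metric.ball_mem_nhds _ hR)
      filter_upwards [this, self_mem_nhdsWithin] with r hr hrS
      exact dslope_bd hR (hd _ (hST hrS)) (hb _ (hST hrS)) hr
    have h5 := h3.add hcomp
    simpa [ContinuousWithinAt, has] using h5
  have h6 := mul_deriv ha (hh.sub_const (h s)) (by simp)
  rw [has] at h6
  refine (h2.add h6).congr_of_mem ?_ hs
  intro r hr
  have := sub_smul_dslope (F (T - r)) (h s) (h r)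
  simp only [smul_eq_mul] at this
  simp only [Pi.add_apply, a]
  linear_combination -this

/-- area under the quarter circle -/
lemma area_deriv {Y v : ℝ} (hY : 0 < Y) (hv0 : 0 < v) (hv : v < Y) :
    HasDerivAt (fun v => Y ^ 2 / 2 * arcsin (v / Y) + v / 2 * √(Y ^ 2 - v ^ 2))
      (√(Y ^ 2 - v ^ 2)) v := by
  have hq : 0 < Y ^ 2 - v ^ 2 := by nlinarith
  have h1 : v / Y < 1 := (div_lt_one hY).2 hv
  have h0 : 0 < v / Y := by positivity
  have ha := (hasDerivAt_arcsin (x := v / Y) (by linarith) h1.ne).comp v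
    ((hasDerivAt_id v).div_const Y)
  have hs : HasDerivAt (fun v => √(Y ^ 2 - v ^ 2)) (-(2 * v) / (2 * √(Y ^ 2 - v ^ 2))) v := by
    have := ((hasDerivAt_pow 2 v).const_sub (Y ^ 2)).sqrt hq.ne'
    simpa using this
  have := (ha.const_mul (Y ^ 2 / 2)).add (((hasDerivAt_id v).div_const 2).mul hs)
  refine this.congr_deriv ?_
  have e : √(1 - (v / Y) ^ 2) = √(Y ^ 2 - v ^ 2) / Y := by
    rw [show 1 - (v / Y) ^ 2 = (Y ^ 2 - v ^ 2) / Y ^ 2 by field_simp,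
      sqrt_div hq.le, sqrt_sq hY.le]
  have hp : 0 < √(Y ^ 2 - v ^ 2) := sqrt_pos.2 hq
  have hsq : √(Y ^ 2 - v ^ 2) ^ 2 = Y ^ 2 - v ^ 2 := sq_sqrt hq.le
  rw [e]
  simp only [id]
  field_simp
  rw [hsq]; ring

lemma area_lower {Y v : ℝ} (hY : 0 < Y) (hv0 : 0 ≤ v) (hv : v ≤ Y) :
    v * √(Y ^ 2 - v ^ 2) ≤ Y ^ 2 / 2 * arcsin (v / Y) + v / 2 * √(Y ^ 2 - v ^ 2) := by
  have hq : 0 ≤ Y ^ 2 - v ^ 2 := by nlinarith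
  have h1 : v / Y ≤ 1 := (div_le_one hY).2 hv
  have h0 : 0 ≤ v / Y := by positivity
  set θ := arcsin (v / Y) with hθ
  have hs : sin θ = v / Y := sin_arcsin (by linarith) h1
  have hc : cos θ = √(Y ^ 2 - v ^ 2) / Y := by
    rw [hθ, cos_arcsin, show 1 - (v / Y) ^ 2 = (Y ^ 2 - v ^ 2) / Y ^ 2 by field_simp,
      sqrt_div hq, sqrt_sq hY.le]
  have hθ0 : 0 ≤ θ := arcsin_nonneg.2 h0
  have h2 : sin θ * cos θ ≤ θ := by
    have := sin_le (x := 2 * θ) (by linarith)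
    rw [sin_two_mul] at this; linarith
  have e : v * √(Y ^ 2 - v ^ 2) = Y ^ 2 * (sin θ * cos θ) := by
    rw [hs, hc]; field_simp
  nlinarith [sq_nonneg Y, mul_le_mul_of_nonneg_left h2 (sq_nonneg Y)]

lemma est_at {σ T C s : ℝ} {x y ξ : ℝ → ℝ} (hσ : 0 < σ) (hC : 0 ≤ C) (hs : s ∈ Icc 0 T)
    (hξ : ∀ r ∈ Icc 0 T, ∀ u ∈ Icc 0 T, |ξ r - ξ u| ≤ σ * √|r - u|)
    (hy : ∀ r ∈ Icc 0 T, HasDerivWithinAt y (2 * y r / ((x r - ξ r) ^ 2 + y r ^ 2)) (Icc 0 T) r)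
    (hx : ∀ r ∈ Icc 0 T, HasDerivWithinAt x
      (-(2 * (x r - ξ r)) / ((x r - ξ r) ^ 2 + y r ^ 2)) (Icc 0 T) r)
    (hpos : ∀ r ∈ Icc 0 T, 0 < y r) (hx0 : x 0 = ξ 0)
    (hbd : ∀ r ∈ Icc 0 T, |x r - ξ r| ≤ C * y r) :
    |x s - ξ s| ≤ σ * π / 8 * √(1 + C ^ 2) * y s := by
  have hsub : Icc 0 s ⊆ Icc 0 T := Icc_subset_Icc_right hs.2
  have hcy : ContinuousOn y (Icc 0 s) := fun r hr =>
    ((hy r (hsub hr)).continuousWithinAt).mono hsub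
  have hcx : ContinuousOn x (Icc 0 s) := fun r hr =>
    ((hx r (hsub hr)).continuousWithinAt).mono hsub
  have hmem : ∀ r ∈ Ioo 0 s, r ∈ Icc 0 T := fun r hr => ⟨hr.1.le, hr.2.le.trans hs.2⟩
  have hnb : ∀ r ∈ Ioo 0 s, Icc 0 T ∈ nhds r := fun r hr =>
    Icc_mem_nhds hr.1 (hr.2.trans_le hs.2)
  have hy' : ∀ r ∈ Ioo 0 s, HasDerivAt y (2 * y r / ((x r - ξ r) ^ 2 + y r ^ 2)) r :=
    fun r hr => (hy r (hmem r hr)).hasDerivAt (hnb r hr)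
  have hx' : ∀ r ∈ Ioo 0 s, HasDerivAt x
      (-(2 * (x r - ξ r)) / ((x r - ξ r) ^ 2 + y r ^ 2)) r :=
    fun r hr => (hx r (hmem r hr)).hasDerivAt (hnb r hr)
  have hden : ∀ r ∈ Icc 0 T, 0 < (x r - ξ r) ^ 2 + y r ^ 2 := fun r hr => by
    have := hpos r hr; positivity
  have mono : ∀ g g' : ℝ → ℝ, ContinuousOn g (Icc 0 s) → (∀ r ∈ Ioo 0 s, HasDerivAt g (g' r) r) →
      (∀ r ∈ Ioo 0 s, 0 ≤ g' r) → MonotoneOn g (Icc 0 s) := by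
    intro g g' hg hd h0
    apply monotoneOn_of_deriv_nonneg (convex_Icc 0 s) hg
    · rw [interior_Icc]; exact fun r hr => (hd r hr).differentiableAt.differentiableWithinAt
    · rw [interior_Icc]; intro r hr; rw [(hd r hr).deriv]; exact h0 r hr
  have hsmono : StrictMonoOn y (Icc 0 s) := by
    apply strictMonoOn_of_deriv_pos (convex_Icc 0 s) hcy
    rw [interior_Icc]; intro r hr; rw [(hy' r hr).deriv]
    have := hpos r (hmem r hr); have := hden r (hmem r hr); positivity
  set Y := y s with hYdef
  have hs0 : (0:ℝ) ≤ s := hs.1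
  have hss : s ∈ Icc 0 s := ⟨hs0, le_rfl⟩
  have h0s : (0:ℝ) ∈ Icc 0 s := ⟨le_rfl, hs0⟩
  have hY : 0 < Y := hpos s hs
  set q := √(1 + C ^ 2) with hq
  have hqp : 0 < q := sqrt_pos.2 (by positivity)
  have hq2 : q ^ 2 = 1 + C ^ 2 := sq_sqrt (by positivity)
  -- time bound
  have htime : ∀ r ∈ Icc 0 s, s - r ≤ q ^ 2 / 4 * (Y ^ 2 - y r ^ 2) := by
    have hm := mono (fun r => q ^ 2 / 4 * y r ^ 2 - r)
      (fun r => q ^ 2 / 4 * (2 * y r * (2 * y r / ((x r - ξ r) ^ 2 + y r ^ 2))) - 1)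
      (by fun_prop) ?_ ?_
    · intro r hr
      have := hm hr hss hr.2
      simp only at this
      linarith
    · intro r hr
      refine ((((hy' r hr).pow 2).const_mul _).sub (hasDerivAt_id r)).congr_deriv ?_
      simp
    · intro r hr
      have hp := hden r (hmem r hr)
      have h1 := hbd r (hmem r hr)
      have h2 : (x r - ξ r) ^ 2 ≤ C ^ 2 * y r ^ 2 := by
        rw [← mul_pow, ← sq_abs]
        gcongr
      have : q ^ 2 / 4 * (2 * y r * (2 * y r / ((x r - ξ r) ^ 2 + y r ^ 2))) =
        q ^ 2 * y r ^ 2 / ((x r - ξ r) ^ 2 + y r ^ 2) := by ring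
      rw [this, sub_nonneg, one_le_div hp, hq2]
      linarith
  have hξb : ∀ r ∈ Icc 0 s, |ξ r - ξ s| ≤ σ * q / 2 * √(Y ^ 2 - y r ^ 2) := by
    intro r hr
    have h1 := hξ r (hsub hr) s hs
    have h2 : √|r - s| ≤ q / 2 * √(Y ^ 2 - y r ^ 2) := by
      rw [abs_sub_comm, abs_of_nonneg (sub_nonneg.2 hr.2)]
      calc √(s - r) ≤ √((q / 2) ^ 2 * (Y ^ 2 - y r ^ 2)) := by
            apply sqrt_le_sqrt; have := htime r hr; linarith
        _ = _ := by rw [sqrt_mul (by positivity), sqrt_sq (by positivity)]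
    calc _ ≤ _ := h1
      _ ≤ σ * (q / 2 * √(Y ^ 2 - y r ^ 2)) := by gcongr
      _ = _ := by ring
  set A : ℝ → ℝ := fun v => Y ^ 2 / 2 * arcsin (v / Y) + v / 2 * √(Y ^ 2 - v ^ 2) with hA
  have hAc : Continuous A := by
    have := continuous_arcsin
    simp only [hA]; fun_prop
  have hAY : A Y = π * Y ^ 2 / 4 := by
    simp [hA, div_self hY.ne']; ring
  have hkey : ∀ ε : ℝ, |ε| = 1 → ε * (x s - ξ s) ≤ σ * π / 8 * q * Y := by
    intro ε hε
    have hm := mono (fun r => σ * q / 2 * A (y r) - ε * ((x r - ξ s) * y r))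
      (fun r => (σ * q / 2 * √(Y ^ 2 - y r ^ 2) - ε * (ξ r - ξ s)) *
        (2 * y r / ((x r - ξ r) ^ 2 + y r ^ 2))) (by fun_prop) ?_ ?_
    · have h1 := hm h0s hss hs0
      simp only at h1
      rw [← hYdef, hAY] at h1
      have h2 := area_lower hY (hpos 0 (hsub h0s)).le (hsmono.monotoneOn h0s hss hs0)
      have h3 := hξb 0 h0s
      rw [← hx0] at h3
      have h4 : ε * (x 0 - ξ s) ≤ σ * q / 2 * √(Y ^ 2 - y 0 ^ 2) := by
        calc _ ≤ |ε * (x 0 - ξ s)| := le_abs_self _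
          _ = |x 0 - ξ s| := by rw [abs_mul, hε, one_mul]
          _ ≤ _ := h3
      have h5 := mul_le_mul_of_nonneg_right h4 (hpos 0 (hsub h0s)).le
      have h6 : σ * q / 2 * (y 0 * √(Y ^ 2 - y 0 ^ 2)) ≤ σ * q / 2 * A (y 0) := by
        gcongr
      have h7 : ε * (x s - ξ s) * Y ≤ σ * π / 8 * q * Y * Y := by linarith
      exact le_of_mul_le_mul_right h7 hY
    · intro r hr
      have hrs : r ∈ Icc 0 s := ⟨hr.1.le, hr.2.le⟩
      have hlt : y r < Y := hsmono hrs hss hr.2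
      have hd := (area_deriv hY (hpos r (hmem r hr)) hlt).comp r (hy' r hr)
      refine ((hd.const_mul (σ * q / 2)).sub
        ((((hx' r hr).sub_const (ξ s)).mul (hy' r hr)).const_mul ε)).congr_deriv ?_
      have := hden r (hmem r hr)
      field_simp
      ring
    · intro r hr
      have hrs : r ∈ Icc 0 s := ⟨hr.1.le, hr.2.le⟩
      have := hpos r (hmem r hr); have := hden r (hmem r hr)
      apply mul_nonneg _ (by positivity)
      rw [sub_nonneg]
      calc _ ≤ |ε * (ξ r - ξ s)| := le_abs_self _
          _ = |ξ r - ξ s| := by rw [abs_mul, hε, one_mul]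
          _ ≤ _ := hξb r hrs
  rw [abs_le]
  have k1 := hkey 1 (by simp)
  have k2 := hkey (-1) (by simp)
  constructor <;> linarith

lemma est {σ T : ℝ} {x y ξ : ℝ → ℝ} (hσ : 0 < σ) (hσ8 : σ < 8 / π) (hT : 0 ≤ T)
    (hξc : ContinuousOn ξ (Icc 0 T))
    (hξ : ∀ r ∈ Icc 0 T, ∀ u ∈ Icc 0 T, |ξ r - ξ u| ≤ σ * √|r - u|)
    (hy : ∀ r ∈ Icc 0 T, HasDerivWithinAt y (2 * y r / ((x r - ξ r) ^ 2 + y r ^ 2)) (Icc 0 T) r)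
    (hx : ∀ r ∈ Icc 0 T, HasDerivWithinAt x
      (-(2 * (x r - ξ r)) / ((x r - ξ r) ^ 2 + y r ^ 2)) (Icc 0 T) r)
    (hpos : ∀ r ∈ Icc 0 T, 0 < y r) (hx0 : x 0 = ξ 0) :
    |x T - ξ T| ≤ π * σ / √(64 - π ^ 2 * σ ^ 2) * y T := by
  have hcy : ContinuousOn y (Icc 0 T) := fun r hr => (hy r hr).continuousWithinAt
  have hcx : ContinuousOn x (Icc 0 T) := fun r hr => (hx r hr).continuousWithinAt
  have hTT : T ∈ Icc 0 T := ⟨hT, le_rfl⟩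
  obtain ⟨s, hs, hmax⟩ := isCompact_Icc.exists_isMaxOn (s := Icc 0 T) ⟨T, hTT⟩
    (f := fun r => |x r - ξ r| / y r)
    (((hcx.sub hξc).abs).div hcy fun r hr => (hpos r hr).ne')
  set C := |x s - ξ s| / y s with hCdef
  have hC : 0 ≤ C := div_nonneg (abs_nonneg _) (hpos s hs).le
  have hbd : ∀ r ∈ Icc 0 T, |x r - ξ r| ≤ C * y r := fun r hr => by
    rw [← div_le_iff₀ (hpos r hr)]; exact hmax hr
  have h1 := est_at hσ hC hs hξ hy hx hpos hx0 hbd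
  rw [← div_le_iff₀ (hpos s hs), ← hCdef] at h1
  have hpi := pi_pos
  have hps : π * σ < 8 := by rw [lt_div_iff₀ hpi] at hσ8; linarith
  have hps0 : 0 < π * σ := by positivity
  have hq2 : √(1 + C ^ 2) ^ 2 = 1 + C ^ 2 := sq_sqrt (by positivity)
  have hd : 0 < 64 - π ^ 2 * σ ^ 2 := by nlinarith
  have h2 : C ^ 2 ≤ (σ * π / 8) ^ 2 * (1 + C ^ 2) := by
    rw [← hq2, ← mul_pow]; gcongr
  have h3 : C ≤ π * σ / √(64 - π ^ 2 * σ ^ 2) := by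
    rw [le_div_iff₀ (sqrt_pos.2 hd)]
    apply le_of_sq_le_sq _ hps0.le
    rw [mul_pow, sq_sqrt hd.le]
    nlinarith
  exact (hbd T hTT).trans (mul_le_mul_of_nonneg_right h3 (hpos T hTT).le)

lemma flow_exists {T y0 : ℝ} {ξ : ℝ → ℝ} (hT : 0 ≤ T) (hy0 : 0 < y0) (hξc : ContinuousOn ξ (Icc 0 T)) :
    ∃ h : ℝ → ℂ, h 0 = (ξ 0 : ℂ) + y0 * Complex.I ∧ (∀ r ∈ Icc 0 T, 0 < (h r).im) ∧
      ∀ r ∈ Icc 0 T, HasDerivWithinAt h (-(2 / (h r - ξ r))) (Icc 0 T) r := by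
  let P : ℂ → ℂ := fun z => ⟨z.re, max z.im y0⟩
  have hPd : ∀ z w, ‖P z - P w‖ ≤ ‖z - w‖ := by
    intro z w
    apply le_of_sq_le_sq _ (norm_nonneg _)
    rw [Complex.sq_norm, Complex.sq_norm, Complex.normSq_apply, Complex.normSq_apply]
    simp only [P, Complex.sub_re, Complex.sub_im]
    have : |max z.im y0 - max w.im y0| ≤ |z.im - w.im| := abs_max_sub_max_le_abs _ _ _
    have := sq_le_sq.2 this
    nlinarith
  have hPn : ∀ z (u : ℝ), y0 ≤ ‖P z - u‖ := by
    intro z u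
    calc y0 ≤ (P z - u).im := by simp [P]
      _ ≤ |(P z - u).im| := le_abs_self _
      _ ≤ _ := Complex.abs_im_le_norm _
  have hPne : ∀ z (u : ℝ), P z - u ≠ 0 := fun z u h => by
    have := hPn z u; rw [h] at this; simp at this; linarith
  let v : ℝ → ℂ → ℂ := fun s z => -(2 / (P z - ξ s))
  let L : NNReal := ⟨2 / y0, by positivity⟩
  let K : NNReal := ⟨2 / y0 ^ 2, by positivity⟩
  let a : NNReal := ⟨2 / y0 * T, by positivity⟩
  have hPL : IsPicardLindelof v (tmin := 0) (tmax := T) ⟨0, le_rfl, hT⟩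
      ((ξ 0 : ℂ) + y0 * Complex.I) a 0 L K := by
    refine ⟨?_, ?_, ?_, ?_⟩
    · intro t ht
      apply LipschitzOnWith.of_dist_le_mul
      intro z _ w _
      rw [dist_eq_norm, dist_eq_norm]
      have e : v t z - v t w = 2 * (P z - P w) / ((P z - ξ t) * (P w - ξ t)) := by
        have h1 := hPne z (ξ t); have h2 := hPne w (ξ t)
        simp only [v]; field_simp; ring
      rw [e, norm_div, norm_mul, norm_mul]
      have hK : (K : ℝ) = 2 / y0 ^ 2 := rfl
      rw [hK]
      calc _ ≤ 2 * ‖z - w‖ / (y0 * y0) := by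
            have := hPd z w; have := hPn z (ξ t); have := hPn w (ξ t)
            simp only [Complex.norm_ofNat]
            gcongr
        _ = _ := by ring
    · intro z _
      have : ContinuousOn (fun s => (P z - (ξ s : ℂ))) (Icc 0 T) :=
        continuousOn_const.sub (Complex.continuous_ofReal.comp_continuousOn hξc)
      exact (continuousOn_const.div this fun s _ => hPne z (ξ s)).neg
    · intro t ht z _
      simp only [v, norm_neg, norm_div, Complex.norm_ofNat]
      have hL : (L : ℝ) = 2 / y0 := rfl
      rw [hL]
      have := hPn z (ξ t)
      gcongr
    · have hL : (L : ℝ) = 2 / y0 := rfl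
      have ha : (a : ℝ) = 2 / y0 * T := rfl
      rw [hL, ha]; simp [hT]
  obtain ⟨h, h0, hh⟩ := hPL.exists_eq_forall_mem_Icc_hasDerivWithinAt₀
  simp only at h0
  have him : ∀ r ∈ Icc 0 T, HasDerivWithinAt (fun s => (h s).im) (v r (h r)).im (Icc 0 T) r := by
    intro r hr
    exact (Complex.imCLM.hasFDerivAt.comp_hasDerivWithinAt r (hh r hr))
  have hvim : ∀ r z, 0 ≤ (v r z).im := by
    intro r z
    simp only [v]
    rw [Complex.neg_im, Complex.div_im]
    have : 0 ≤ (P z - ξ r).im := by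
      simp only [P]; simp; right; exact hy0.le
    have h2 := Complex.normSq_nonneg (P z - ξ r)
    simp only [Complex.re_ofNat, Complex.im_ofNat, zero_mul, zero_div, zero_sub, neg_neg]
    positivity
  have hmono : MonotoneOn (fun s => (h s).im) (Icc 0 T) := by
    apply monotoneOn_of_hasDerivWithinAt_nonneg (convex_Icc 0 T)
      (fun r hr => (him r hr).continuousWithinAt)
    · intro r hr; exact (him r (interior_subset hr)).mono interior_subset
    · intro r _; exact hvim _ _
  have hge : ∀ r ∈ Icc 0 T, y0 ≤ (h r).im := by
    intro r hr
    have := hmono ⟨le_rfl, hT⟩ hr hr.1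
    simp only [h0] at this
    simpa using this
  refine ⟨h, h0, fun r hr => hy0.trans_le (hge r hr), fun r hr => ?_⟩
  have hP : P (h r) = h r := by
    apply Complex.ext <;> simp [P, hge r hr]
  have := hh r hr
  simp only [v, hP] at this
  exact this

lemma cayley_le {w : ℂ} (hw : 0 < w.im) : ‖(w - Complex.I) / (w + Complex.I)‖ ≤ 1 := by
  rw [norm_div]
  apply div_le_one_of_le₀ _ (norm_nonneg _)
  apply le_of_sq_le_sq _ (norm_nonneg _)
  rw [Complex.sq_norm, Complex.sq_norm, Complex.normSq_apply, Complex.normSq_apply]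
  simp
  nlinarith

lemma add_I_ne {w : ℂ} (hw : 0 < w.im) : w + Complex.I ≠ 0 := by
  intro h
  have := congrArg Complex.im h
  simp at this; linarith

lemma cayley_inj {w z : ℂ} (hw : 0 < w.im) (hz : 0 < z.im)
    (h : (w - Complex.I) / (w + Complex.I) = (z - Complex.I) / (z + Complex.I)) : w = z := by
  rw [div_eq_div_iff (add_I_ne hw) (add_I_ne hz)] at h
  have h2 : 2 * Complex.I * (w - z) = 0 := by linear_combination h
  have h3 : w - z = 0 := by
    rcases mul_eq_zero.1 h2 with h | h
    · simp at h
    · exact h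
  exact sub_eq_zero.1 h3

lemma cayley_deriv {𝕜 : Type*} [NontriviallyNormedField 𝕜] [NormedAlgebra 𝕜 ℂ]
    {g : 𝕜 → ℂ} {g' : ℂ} {S : Set 𝕜} {s : 𝕜}
    (hg : HasDerivWithinAt g g' S s) (hp : 0 < (g s).im) :
    HasDerivWithinAt (fun r => (g r - Complex.I) / (g r + Complex.I))
      (2 * Complex.I / (g s + Complex.I) ^ 2 * g') S s := by
  refine ((hg.sub_const Complex.I).div (hg.add_const Complex.I) (add_I_ne hp)).congr_deriv ?_
  have := add_I_ne hp
  field_simp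
  ring

/-- the chain follows the backward flow -/
lemma chain_eq_flow {T : ℝ} (dr : ℝ → ℝ) (hT : T ∈ Icc (0:ℝ) 1)
    (f : ℝ → ℂ → ℂ)
    (hf_holo : ∀ u ∈ Icc (0 : ℝ) 1, DifferentiableOn ℂ (f u) {z : ℂ | 0 < z.im})
    (hf_maps : ∀ u ∈ Icc (0 : ℝ) 1, MapsTo (f u) {z : ℂ | 0 < z.im} {z : ℂ | 0 < z.im})
    (hf_zero : ∀ z : ℂ, 0 < z.im → f 0 z = z)
    (hf_ode : ∀ z : ℂ, 0 < z.im → ∀ u ∈ Icc (0 : ℝ) 1,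
      HasDerivWithinAt (fun s => f s z)
        (-(2 / (z - (dr u : ℂ))) * deriv (f u) z) (Icc (0 : ℝ) 1) u)
    (h : ℝ → ℂ) (hpos : ∀ r ∈ Icc 0 T, 0 < (h r).im)
    (hh : ∀ r ∈ Icc 0 T, HasDerivWithinAt h (-(2 / (h r - dr (T - r)))) (Icc 0 T) r) :
    f T (h 0) = h T := by
  let F : ℝ → ℂ → ℂ := fun t z => (f t z - Complex.I) / (f t z + Complex.I)
  have hUo : IsOpen {z : ℂ | 0 < z.im} := isOpen_lt continuous_const Complex.continuous_im
  have hST : MapsTo (fun r => T - r) (Icc 0 T) (Icc (0:ℝ) 1) := fun r hr =>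
    ⟨by linarith [hr.2], by linarith [hr.1, hT.2]⟩
  have hFd : ∀ t ∈ Icc (0:ℝ) 1, DifferentiableOn ℂ (F t) {z : ℂ | 0 < z.im} := by
    intro t ht z hz
    exact (cayley_deriv (hf_holo t ht z hz).hasDerivWithinAt
      (hf_maps t ht hz)).differentiableWithinAt
  have hFt : ∀ z : ℂ, 0 < z.im → ∀ t ∈ Icc (0:ℝ) 1,
      HasDerivWithinAt (fun s => F s z) (-(2 / (z - (dr t : ℂ))) * deriv (F t) z) (Icc (0:ℝ) 1) t := by
    intro z hz t ht
    have h1 := cayley_deriv (hf_ode z hz t ht) (hf_maps t ht hz)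
    refine h1.congr_deriv ?_
    have h2 : HasDerivAt (f t) (deriv (f t) z) z :=
      ((hf_holo t ht).differentiableAt (hUo.mem_nhds hz)).hasDerivAt
    have h3 := cayley_deriv h2.hasDerivWithinAt (hf_maps t ht hz) (S := univ)
    rw [hasDerivWithinAt_univ] at h3
    have h4 : deriv (F t) z = _ := h3.deriv
    rw [h4]; ring
  have hG : ∀ s ∈ Icc 0 T, HasDerivWithinAt (fun r => F (T - r) (h r)) 0 (Icc 0 T) s := by
    intro s hs
    obtain ⟨R, hR, hball⟩ := Metric.isOpen_iff.1 hUo (h s) (hpos s hs)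
    have := chain (F := F) (I := Icc (0:ℝ) 1) hR hs hST (hh s hs)
      (fun t ht => (hFd t ht).mono hball)
      (fun t ht z hz => cayley_le (hf_maps t ht (hball hz)))
      (fun z hz => (hFt z (hball hz) _ (hST hs)).continuousWithinAt)
      (hFt (h s) (hpos s hs) _ (hST hs))
    refine this.congr_deriv ?_
    ring
  have hT0 : (0:ℝ) ∈ Icc 0 T := ⟨le_rfl, hT.1⟩
  have hTT : T ∈ Icc 0 T := ⟨hT.1, le_rfl⟩
  have hconst : F (T - T) (h T) = F (T - 0) (h 0) := by
    refine constant_of_has_deriv_right_zero (f := fun r => F (T - r) (h r))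
      (fun r hr => (hG r hr).continuousWithinAt) ?_ T hTT
    intro r hr
    exact (hG r ⟨hr.1, hr.2.le⟩).mono_of_mem_nhdsWithin (Icc_mem_nhdsGE_of_mem hr)
  simp only [sub_self, sub_zero, F] at hconst
  rw [hf_zero _ (hpos T hTT)] at hconst
  exact cayley_inj (hf_maps T hT (hpos 0 hT0)) (hpos T hTT) hconst.symm

/-- Cone theorem for Loewner curves, range `0 < σ < 8/π`: the curve stays in the cone
`{|Re z| ≤ (πσ/√(64−π²σ²)) · Im z}`. -/
theorem loewner_curve_cone_bound_small_sigma
    (σ : ℝ) (hσ0 : 0 < σ)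
    (dr : ℝ → ℝ) (hdrcont : ContinuousOn dr (Icc 0 1)) (hdr0 : dr 0 = 0)
    (hdrlip : ∀ s ∈ Icc (0 : ℝ) 1, ∀ u ∈ Icc (0 : ℝ) 1,
      |dr u - dr s| ≤ σ * Real.sqrt |u - s|)
    (f : ℝ → ℂ → ℂ)
    (hf_inj : ∀ u ∈ Icc (0 : ℝ) 1, InjOn (f u) {z : ℂ | 0 < z.im})
    (hf_holo : ∀ u ∈ Icc (0 : ℝ) 1, DifferentiableOn ℂ (f u) {z : ℂ | 0 < z.im})
    (hf_maps : ∀ u ∈ Icc (0 : ℝ) 1, MapsTo (f u) {z : ℂ | 0 < z.im} {z : ℂ | 0 < z.im})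
    (hf_zero : ∀ z : ℂ, 0 < z.im → f 0 z = z)
    (hf_ode : ∀ z : ℂ, 0 < z.im → ∀ u ∈ Icc (0 : ℝ) 1,
      HasDerivWithinAt (fun s => f s z)
        (-(2 / (z - (dr u : ℂ))) * deriv (f u) z) (Icc (0 : ℝ) 1) u)
    (γ : ℝ → ℂ) (hγcont : ContinuousOn γ (Icc 0 1))
    (hγlim : ∀ u ∈ Icc (0 : ℝ) 1,
      Filter.Tendsto (fun y : ℝ => f u ((dr u : ℂ) + y * Complex.I))
        (nhdsWithin 0 (Ioi (0 : ℝ))) (nhds (γ u)))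
    (hσ8 : σ < 8 / Real.pi) :
    ∀ u ∈ Icc (0 : ℝ) 1,
      |(γ u).re| ≤ Real.pi * σ / Real.sqrt (64 - Real.pi ^ 2 * σ ^ 2) * (γ u).im := by
  intro T hT
  have hcl : IsClosed {z : ℂ | |z.re| ≤ π * σ / √(64 - π ^ 2 * σ ^ 2) * z.im} :=
    isClosed_le (by fun_prop) (by fun_prop)
  refine hcl.mem_of_tendsto (hγlim T hT) ?_
  filter_upwards [self_mem_nhdsWithin] with y0 hy0
  have hST : MapsTo (fun r => T - r) (Icc 0 T) (Icc (0:ℝ) 1) := fun r hr =>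
    ⟨by linarith [hr.2], by linarith [hr.1, hT.2]⟩
  have hξc : ContinuousOn (fun r => dr (T - r)) (Icc 0 T) :=
    hdrcont.comp (by fun_prop) hST
  obtain ⟨h, h0, hpos, hh⟩ := flow_exists (y0 := y0) hT.1 hy0 hξc
  simp only [sub_zero] at h0
  have hflow := chain_eq_flow dr hT f hf_holo hf_maps hf_zero hf_ode h hpos hh
  rw [h0] at hflow
  change |_| ≤ _ * _
  rw [hflow]
  have hnorm : ∀ r, Complex.normSq (h r - dr (T - r)) =
      ((h r).re - dr (T - r)) ^ 2 + (h r).im ^ 2 := by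
    intro r; rw [Complex.normSq_apply]; simp; ring
  have key := est (x := fun r => (h r).re) (y := fun r => (h r).im) (ξ := fun r => dr (T - r))
    hσ0 hσ8 hT.1 hξc ?_ ?_ ?_ hpos ?_
  · simpa [hdr0] using key
  · intro r hr u hu
    have := hdrlip _ (hST hu) _ (hST hr)
    rwa [show T - r - (T - u) = -(r - u) by ring, abs_neg] at this
  · intro r hr
    refine (Complex.imCLM.hasFDerivAt.comp_hasDerivWithinAt r (hh r hr)).congr_deriv ?_
    rw [Complex.imCLM_apply, Complex.neg_im, Complex.div_im, hnorm]
    simp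
  · intro r hr
    refine (Complex.reCLM.hasFDerivAt.comp_hasDerivWithinAt r (hh r hr)).congr_deriv ?_
    rw [Complex.reCLM_apply, Complex.neg_re, Complex.div_re, hnorm]
    simp
    ring
  · simp [h0]
end
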